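/- Let (R, m, k) be a Noetherian local ring, S := R[X_1,…,X_n] a graded polynomial ring over R with deg X_i > 0 (and R in degree 0), and M a finitely generated graded S-module; set M̄ := M ⊗_R k. For integers μ and ℓ: if cd_{S_+}( Tor_1^R(M, k) ) ≤ ℓ + 1, then ( H^i_{S_+}(M)_μ = 0 for all i ≥ ℓ ) implies ( H^i_{S_+}(M̄)_μ = 0 for all i ≥ ℓ ); and the two conditions are equivalent if cd_{S_+}( Tor_1^R(M, k) ) ≤ ℓ. In particular, reg(M̄) ≤ reg(M) if cd_{S_+}( Tor_1^R(M, k) ) ≤ 1, and reg(M̄) = reg(M) if in addition depth_{S_+}(M) > 0. -/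

import Mathlib

noncomputable section CechCore

variable (A : Type) [CommRing A] {n : ℕ} (x : Fin n → A)
  (M : Type) [AddCommGroup M] [Module A M]

/-- The localization of `M` at the powers of `∏ i ∈ S, x i`. -/
abbrev cechL (S : Finset (Fin n)) : Type :=
  LocalizedModule (Submonoid.powers (∏ i ∈ S, x i)) M

/-- The `p`-th term of the (stable Koszul/Čech) complex of `M` with respect to `x`. -/
abbrev cechC (p : ℕ) : Type := ∀ S : {S : Finset (Fin n) // S.card = p}, cechL A x M S.1

/-- The localization map between Čech localizations, for `S ⊆ T`. -/
def cechMap (S T : Finset (Fin n)) (h : S ⊆ T) : cechL A x M S →ₗ[A] cechL A x M T :=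
  LocalizedModule.lift _ (LocalizedModule.mkLinearMap (Submonoid.powers (∏ i ∈ T, x i)) M)
    (by
      rintro ⟨s, k, rfl⟩
      simp only [map_pow]
      refine IsUnit.pow k ?_
      have hu : IsUnit ((algebraMap A (Module.End A (cechL A x M T))) (∏ i ∈ T, x i)) :=
        IsLocalizedModule.map_units (LocalizedModule.mkLinearMap _ M)
          ⟨∏ i ∈ T, x i, Submonoid.mem_powers _⟩
      have h2 : (∏ i ∈ T, x i) = (∏ i ∈ T \ S, x i) * ∏ i ∈ S, x i :=
        (Finset.prod_sdiff h).symm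
      have hu' : IsUnit ((algebraMap A (Module.End A (cechL A x M T)))
          ((∏ i ∈ T \ S, x i) * ∏ i ∈ S, x i)) := by rw [← h2]; exact hu
      rw [map_mul] at hu'
      exact (((Commute.all ((∏ i ∈ T \ S, x i)) (∏ i ∈ S, x i)).map
        (algebraMap A (Module.End A (cechL A x M T))).toMonoidHom).isUnit_mul_iff.mp hu').2)

/-- The Čech differential. -/
def cechD (p : ℕ) : cechC A x M p →ₗ[A] cechC A x M (p + 1) :=
  LinearMap.pi fun T =>
    ∑ j ∈ T.1.attach,
      ((-1 : A) ^ (T.1.filter (fun a => a < j.1)).card) •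
        ((cechMap A x M (T.1.erase j.1) T.1 (Finset.erase_subset _ _)).comp
          (LinearMap.proj (⟨T.1.erase j.1, by
            simp [Finset.card_erase_of_mem j.2, T.2]⟩ : {S : Finset (Fin n) // S.card = p})))

/-- `c` is a coboundary in the Čech complex. -/
def cechIsBoundary : (p : ℕ) → cechC A x M p → Prop
  | 0, c => c = 0
  | (q + 1), c => ∃ b : cechC A x M q, cechD A x M q b = c

/-- The degree-`μ` graded piece of a Čech localization, for a grading `ℳ` of `M`
over a grading of `A` in which `x i` has degree `w i`. -/
def cechGrade (ℳ : ℤ → AddSubgroup M) (w : Fin n → ℤ) (μ : ℤ) (S : Finset (Fin n)) :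
    AddSubgroup (cechL A x M S) :=
  AddSubgroup.closure
    {c | ∃ (m : M) (k : ℕ), m ∈ ℳ (μ + k * (∑ i ∈ S, w i)) ∧
      c = LocalizedModule.mk m ⟨(∏ i ∈ S, x i) ^ k, Submonoid.pow_mem _ (Submonoid.mem_powers _) k⟩}

/-- `H^i_{(x)}(M)_μ ≠ 0`: there is a homogeneous degree-`μ` cocycle in the Čech complex
which is not a coboundary.  This is the nonvanishing of the degree-`μ` part of the `i`-th
local cohomology of the graded module `M` supported on the ideal generated by `x`. -/
def lcGradeNonzero (ℳ : ℤ → AddSubgroup M) (w : Fin n → ℤ) (i : ℕ) (μ : ℤ) : Prop :=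
  ∃ c : cechC A x M i, (∀ T, c T ∈ cechGrade A x M ℳ w μ T.1) ∧
    cechD A x M i c = 0 ∧ ¬ cechIsBoundary A x M i c

/-- `H^i_{(x)}(M) = 0` : every Čech cocycle is a coboundary. -/
def lcVanish (i : ℕ) : Prop :=
  ∀ c : cechC A x M i, cechD A x M i c = 0 → cechIsBoundary A x M i c

/-- The map from the previous term of the Čech complex (declared as the zero map in
homological degree `0`). -/
def cechDprev : (i : ℕ) → (cechC A x M (i - 1) →ₗ[A] cechC A x M i)
  | 0 => 0
  | (q + 1) => cechD A x M q

/-- The `i`-th local cohomology module of `M` supported on the ideal generated by `x`,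
defined as cocycles modulo (cocycles ∩ boundaries) of the Čech complex. -/
def lcMod (i : ℕ) : Type :=
  ↥(LinearMap.ker (cechD A x M i)) ⧸
    (Submodule.comap (LinearMap.ker (cechD A x M i)).subtype
      (LinearMap.range (cechDprev A x M i)))

instance (i : ℕ) : AddCommGroup (lcMod A x M i) := by unfold lcMod; infer_instance
instance (i : ℕ) : Module A (lcMod A x M i) := by unfold lcMod; infer_instance

/-- The ideal of elements of positive degree of a graded ring. -/
def irrelevantIdeal (𝒜 : ℤ → AddSubgroup A) : Ideal A :=
  Ideal.span {a : A | ∃ μ > 0, a ∈ 𝒜 μ}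

end CechCore

noncomputable section TmulCore

variable (R : Type) [CommRing R] (S : Type) [CommRing S] [Algebra R S]
variable (M : Type) [AddCommGroup M] [Module R M] [Module S M] [IsScalarTower R S M]
variable (N : Type) [AddCommGroup N] [Module R N]

/-- The `S`-linear map `m ↦ m ⊗ n`. -/
def tmulRightS (nn : N) : M →ₗ[S] TensorProduct R M N where
  toFun := fun m => m ⊗ₜ[R] nn
  map_add' := fun a b => TensorProduct.add_tmul a b nn
  map_smul' := fun s m => by simp [TensorProduct.smul_tmul']

/-- The canonical map `(M_f) ⊗_R N → (M ⊗_R N)_f` at the level of Čech localizations,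
sending `m/f^k ⊗ n` to `(m ⊗ n)/f^k`. -/
def cechTmul {n : ℕ} (x : Fin n → S) (T : Finset (Fin n))
    (c : cechL S x M T) (nn : N) : cechL S x (TensorProduct R M N) T :=
  LocalizedModule.lift _
    ((LocalizedModule.mkLinearMap (Submonoid.powers (∏ i ∈ T, x i))
        (TensorProduct R M N)).comp (tmulRightS R S M N nn))
    (fun s => IsLocalizedModule.map_units
      (LocalizedModule.mkLinearMap (Submonoid.powers (∏ i ∈ T, x i)) (TensorProduct R M N)) s) c

end TmulCore

noncomputable section TorCore

variable (R : Type) [CommRing R] (S : Type) [CommRing S] [Algebra R S]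
variable (M : Type) [AddCommGroup M] [Module R M] [Module S M] [IsScalarTower R S M]
variable (F : ℕ → Type) [∀ q, AddCommGroup (F q)] [∀ q, Module R (F q)]
variable (dF : ∀ q : ℕ, F (q + 1) →ₗ[R] F q)

/-- The differential `M ⊗ F_{q+1} → M ⊗ F_q` of the complex `M ⊗_R F_•`, as a map of
`S`-modules (through the `S`-module structure of `M`). -/
def torD (q : ℕ) : TensorProduct R M (F (q + 1)) →ₗ[S] TensorProduct R M (F q) :=
  TensorProduct.AlgebraTensorModule.map (LinearMap.id : M →ₗ[S] M) (dF q)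

/-- The outgoing differential `M ⊗ F_q → M ⊗ F_{q-1}` (the zero map for `q = 0`). -/
def torDout : (q : ℕ) → (TensorProduct R M (F q) →ₗ[S] TensorProduct R M (F (q - 1)))
  | 0 => 0
  | (q + 1) => torD R S M F dF q

/-- `Tor_q^R(M, N)` computed from a given free resolution `F_• → N` of `N`, as an
`S`-module: the homology `ker(M ⊗ F_q → M ⊗ F_{q-1}) / im(M ⊗ F_{q+1} → M ⊗ F_q)`. -/
def torMod (q : ℕ) : Type :=
  ↥(LinearMap.ker (torDout R S M F dF q)) ⧸
    (Submodule.comap (LinearMap.ker (torDout R S M F dF q)).subtype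
      (LinearMap.range (torD R S M F dF q)))

instance (q : ℕ) : AddCommGroup (torMod R S M F dF q) := by unfold torMod; infer_instance
instance (q : ℕ) : Module S (torMod R S M F dF q) := by unfold torMod; infer_instance

end TorCore


noncomputable section PartOne

variable {A : Type} [CommRing A] {n : ℕ} (x : Fin n → A)
variable {M : Type} [AddCommGroup M] [Module A M]
variable {N : Type} [AddCommGroup N] [Module A N]
variable {P : Type} [AddCommGroup P] [Module A P]

/-- The fraction `m / (∏ x)^k`. -/
def cfrac (T : Finset (Fin n)) (k : ℕ) (m : M) : cechL A x M T :=
  LocalizedModule.mk m ⟨(∏ i ∈ T, x i) ^ k, Submonoid.pow_mem _ (Submonoid.mem_powers _) k⟩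

lemma cfrac_exists (T : Finset (Fin n)) (c : cechL A x M T) : ∃ k m, c = cfrac x T k m := by
  induction c using LocalizedModule.induction_on with
  | h m s =>
    obtain ⟨s, k, rfl⟩ := s
    exact ⟨k, m, rfl⟩

lemma cfrac_eq_iff (T : Finset (Fin n)) (k l : ℕ) (m m' : M) :
    cfrac x T k m = cfrac x T l m' ↔
      ∃ a : ℕ, (∏ i ∈ T, x i) ^ (a + l) • m = (∏ i ∈ T, x i) ^ (a + k) • m' := by
  unfold cfrac
  rw [LocalizedModule.mk_eq]
  constructor
  · rintro ⟨⟨_, a, rfl⟩, h⟩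
    refine ⟨a, ?_⟩
    simpa [Submonoid.smul_def, smul_smul, pow_add] using h
  · rintro ⟨a, h⟩
    refine ⟨⟨_, a, rfl⟩, ?_⟩
    simpa [Submonoid.smul_def, smul_smul, pow_add] using h

lemma cfrac_add (T : Finset (Fin n)) (k : ℕ) (m m' : M) :
    cfrac x T k (m + m') = cfrac x T k m + cfrac x T k m' := by
  unfold cfrac
  rw [LocalizedModule.mk_add_mk, LocalizedModule.mk_eq]
  refine ⟨1, ?_⟩
  simp [Submonoid.smul_def, smul_smul]

lemma cfrac_zero (T : Finset (Fin n)) (k : ℕ) : cfrac x T k (0 : M) = 0 :=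
  LocalizedModule.zero_mk _

lemma cfrac_smul (T : Finset (Fin n)) (k : ℕ) (a : A) (m : M) :
    cfrac x T k (a • m) = a • cfrac x T k m := by
  unfold cfrac
  rw [LocalizedModule.smul'_mk]

lemma cfrac_shift (T : Finset (Fin n)) (k l : ℕ) (m : M) :
    cfrac x T k m = cfrac x T (k + l) ((∏ i ∈ T, x i) ^ l • m) := by
  rw [cfrac_eq_iff]
  exact ⟨0, by simp [smul_smul, pow_add]⟩

lemma cfrac_eq_zero_iff (T : Finset (Fin n)) (k : ℕ) (m : M) :
    cfrac x T k m = 0 ↔ ∃ a : ℕ, (∏ i ∈ T, x i) ^ a • m = 0 := by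
  rw [← cfrac_zero x T 0, cfrac_eq_iff]
  simp

lemma cechMap_cfrac (S T : Finset (Fin n)) (h : S ⊆ T) (k : ℕ) (m : M) :
    cechMap A x M S T h (cfrac x S k m) = cfrac x T k ((∏ i ∈ T \ S, x i) ^ k • m) := by
  unfold cechMap cfrac
  rw [LocalizedModule.lift_mk]
  rw [Module.End.algebraMap_isUnit_inv_apply_eq_iff]
  simp only [LocalizedModule.mkLinearMap_apply]
  rw [LocalizedModule.smul'_mk, LocalizedModule.mk_eq]
  refine ⟨1, ?_⟩
  simp only [one_smul, Submonoid.smul_def, smul_smul]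
  rw [← Finset.prod_sdiff h, mul_pow, mul_comm]

lemma cechMap_comp (S T U : Finset (Fin n)) (h : S ⊆ T) (h' : T ⊆ U) (c : cechL A x M S) :
    cechMap A x M T U h' (cechMap A x M S T h c) = cechMap A x M S U (h.trans h') c := by
  obtain ⟨k, m, rfl⟩ := cfrac_exists x S c
  rw [cechMap_cfrac, cechMap_cfrac, cechMap_cfrac, smul_smul, ← mul_pow]
  congr 2
  rw [← Finset.prod_union]
  · congr 2
    ext i
    simp only [Finset.mem_union, Finset.mem_sdiff]
    have := @h i; have := @h' i; tauto
  · rw [Finset.disjoint_left]; intro i; simp only [Finset.mem_sdiff]; tauto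

/-- Functoriality of the localizations. -/
def cechLmap (f : M →ₗ[A] N) (T : Finset (Fin n)) : cechL A x M T →ₗ[A] cechL A x N T :=
  IsLocalizedModule.map (Submonoid.powers (∏ i ∈ T, x i)) (LocalizedModule.mkLinearMap _ M)
    (LocalizedModule.mkLinearMap _ N) f

@[simp] lemma cechLmap_cfrac (f : M →ₗ[A] N) (T : Finset (Fin n)) (k : ℕ) (m : M) :
    cechLmap x f T (cfrac x T k m) = cfrac x T k (f m) := by
  unfold cechLmap cfrac
  rw [IsLocalizedModule.map_LocalizedModules]

lemma cechLmap_cechMap (f : M →ₗ[A] N) (S T : Finset (Fin n)) (h : S ⊆ T) (c : cechL A x M S) :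
    cechLmap x f T (cechMap A x M S T h c) = cechMap A x N S T h (cechLmap x f S c) := by
  obtain ⟨k, m, rfl⟩ := cfrac_exists x S c
  simp [cechMap_cfrac]

lemma cechLmap_comp (f : M →ₗ[A] N) (g : N →ₗ[A] P) (T : Finset (Fin n)) (c : cechL A x M T) :
    cechLmap x g T (cechLmap x f T c) = cechLmap x (g ∘ₗ f) T c := by
  obtain ⟨k, m, rfl⟩ := cfrac_exists x T c
  simp

lemma cechLmap_exact (f : M →ₗ[A] N) (g : N →ₗ[A] P) (h : Function.Exact f g)
    (T : Finset (Fin n)) : Function.Exact (cechLmap x f T) (cechLmap x g T) :=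
  LocalizedModule.map_exact _ f g h

/-- Functoriality of the Čech complex. -/
def cechCmap (f : M →ₗ[A] N) (p : ℕ) : cechC A x M p →ₗ[A] cechC A x N p :=
  LinearMap.pi fun T => (cechLmap x f T.1).comp (LinearMap.proj T)

@[simp] lemma cechCmap_apply (f : M →ₗ[A] N) (p : ℕ) (c : cechC A x M p) (T) :
    cechCmap x f p c T = cechLmap x f T.1 (c T) := rfl

lemma cechCmap_comp (f : M →ₗ[A] N) (g : N →ₗ[A] P) (p : ℕ) (c : cechC A x M p) :
    cechCmap x g p (cechCmap x f p c) = cechCmap x (g ∘ₗ f) p c := by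
  ext T; exact cechLmap_comp x f g T.1 (c T)

lemma cechCmap_id (p : ℕ) (c : cechC A x M p) :
    cechCmap x (LinearMap.id : M →ₗ[A] M) p c = c := by
  ext T
  obtain ⟨k, m, h⟩ := cfrac_exists x T.1 (c T)
  simp [h]

lemma cechCmap_zero (p : ℕ) (c : cechC A x M p) :
    cechCmap x (0 : M →ₗ[A] N) p c = 0 := by
  ext T
  obtain ⟨k, m, h⟩ := cfrac_exists x T.1 (c T)
  simp [h, cfrac_zero]

lemma cechCmap_add (f g : M →ₗ[A] N) (p : ℕ) (c : cechC A x M p) :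
    cechCmap x (f + g) p c = cechCmap x f p c + cechCmap x g p c := by
  ext T
  obtain ⟨k, m, h⟩ := cfrac_exists x T.1 (c T)
  simp [h, cfrac_add]

lemma cechCmap_smul (a : A) (f : M →ₗ[A] N) (p : ℕ) (c : cechC A x M p) :
    cechCmap x (a • f) p c = a • cechCmap x f p c := by
  ext T
  obtain ⟨k, m, h⟩ := cfrac_exists x T.1 (c T)
  simp [h, cfrac_smul]

lemma cechCmap_sum {ι : Type*} (s : Finset ι) (f : ι → (M →ₗ[A] N)) (p : ℕ) (c : cechC A x M p) :
    cechCmap x (∑ i ∈ s, f i) p c = ∑ i ∈ s, cechCmap x (f i) p c := by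
  classical
  induction s using Finset.induction_on with
  | empty => simp [cechCmap_zero]
  | insert a s ha ih => rw [Finset.sum_insert ha, Finset.sum_insert ha, cechCmap_add, ih]

lemma cechCmap_exact (f : M →ₗ[A] N) (g : N →ₗ[A] P) (h : Function.Exact f g) (p : ℕ) :
    Function.Exact (cechCmap x f p) (cechCmap x g p) := by
  intro c
  constructor
  · intro hc
    have : ∀ T, ∃ b, cechLmap x f T.1 b = c T := fun T =>
      (cechLmap_exact x f g h T.1 (c T)).1 (congrFun hc T)
    choose b hb using this
    exact ⟨b, funext hb⟩
  · rintro ⟨b, rfl⟩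
    ext T
    exact (cechLmap_exact x f g h T.1 _).2 ⟨b T, rfl⟩

lemma cechCmap_surjective (f : M →ₗ[A] N) (h : Function.Surjective f) (p : ℕ) :
    Function.Surjective (cechCmap x f p) := by
  intro c
  have : ∀ T, ∃ b, cechLmap x f T.1 b = c T := by
    intro T
    obtain ⟨k, m, hm⟩ := cfrac_exists x T.1 (c T)
    obtain ⟨m', rfl⟩ := h m
    exact ⟨cfrac x T.1 k m', by rw [hm]; simp⟩
  choose b hb using this
  exact ⟨b, funext hb⟩

lemma cechCmap_injective (f : M →ₗ[A] N) (h : Function.Injective f) (p : ℕ) :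
    Function.Injective (cechCmap x f p) := by
  have := cechCmap_exact x (0 : M →ₗ[A] M) f
    (by intro y; constructor
        · intro hy; exact ⟨0, by simpa using (h (by simpa using hy)).symm⟩
        · rintro ⟨z, rfl⟩; simp) p
  rw [injective_iff_map_eq_zero]
  intro c hc
  obtain ⟨b, rfl⟩ := (this c).1 hc
  exact cechCmap_zero x p b

/-- Extension by zero of a cochain to all finsets. -/
def cext {p : ℕ} (c : cechC A x M p) (S : Finset (Fin n)) : cechL A x M S :=
  if h : S.card = p then c ⟨S, h⟩ else 0

/-- sign -/
def csgn (T : Finset (Fin n)) (j : Fin n) : A := (-1 : A) ^ (T.filter (fun a => a < j)).card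

lemma cechD_apply (p : ℕ) (c : cechC A x M p) (T : {S : Finset (Fin n) // S.card = p + 1}) :
    cechD A x M p c T = ∑ j ∈ T.1, (csgn T.1 j : A) •
      cechMap A x M (T.1.erase j) T.1 (Finset.erase_subset _ _) (cext x c (T.1.erase j)) := by
  unfold cechD
  rw [← Finset.sum_attach T.1]
  simp only [LinearMap.pi_apply, LinearMap.sum_apply, LinearMap.smul_apply, LinearMap.comp_apply,
    LinearMap.proj_apply, csgn]
  refine Finset.sum_congr rfl fun j _ => ?_
  rw [cext, dif_pos]

lemma cechCmap_D (f : M →ₗ[A] N) (p : ℕ) (c : cechC A x M p) :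
    cechD A x N p (cechCmap x f p c) = cechCmap x f (p + 1) (cechD A x M p c) := by
  ext T
  rw [cechCmap_apply, cechD_apply, cechD_apply, map_sum]
  refine Finset.sum_congr rfl fun j hj => ?_
  rw [map_smul, cechLmap_cechMap]
  congr 2
  have h : (T.1.erase j).card = p := by rw [Finset.card_erase_of_mem hj, T.2]; rfl
  rw [cext, cext, dif_pos h, dif_pos h, cechCmap_apply]

lemma csgn_swap (T : Finset (Fin n)) (j j' : Fin n) (hj : j ∈ T) (hlt : j < j') :
    (csgn T j * csgn (T.erase j) j' : A) = - (csgn T j' * csgn (T.erase j') j) := by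
  unfold csgn
  have h1 : (T.erase j').filter (fun a => a < j) = T.filter (fun a => a < j) := by
    ext a; simp only [Finset.mem_filter, Finset.mem_erase]
    constructor
    · tauto
    · rintro ⟨h, h'⟩; exact ⟨⟨(h'.trans hlt).ne, h⟩, h'⟩
  have h2 : (T.erase j).filter (fun a => a < j') = (T.filter (fun a => a < j')).erase j := by
    ext a; simp only [Finset.mem_filter, Finset.mem_erase]; tauto
  have h3 : ((T.filter (fun a => a < j')).erase j).card + 1 = (T.filter (fun a => a < j')).card :=
    Finset.card_erase_add_one (by simp [hj, hlt])
  rw [h1, h2, ← h3]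
  ring

lemma cechD_D (p : ℕ) (c : cechC A x M p) : cechD A x M (p + 1) (cechD A x M p c) = 0 := by
  ext T
  rw [cechD_apply]
  let G : Finset (Fin n) → cechL A x M T.1 := fun S =>
    if h : S ⊆ T.1 then cechMap A x M S T.1 h (cext x c S) else 0
  have key : ∀ j ∈ T.1, (csgn T.1 j : A) • cechMap A x M (T.1.erase j) T.1 (Finset.erase_subset _ _)
      (cext x (cechD A x M p c) (T.1.erase j)) =
      ∑ j' ∈ T.1.erase j, (csgn T.1 j * csgn (T.1.erase j) j' : A) • G ((T.1.erase j).erase j') := by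
    intro j hj
    have h : (T.1.erase j).card = p + 1 := by rw [Finset.card_erase_of_mem hj, T.2]; rfl
    rw [cext, dif_pos h, cechD_apply, map_sum, Finset.smul_sum]
    refine Finset.sum_congr rfl fun j' hj' => ?_
    have hs : (T.1.erase j).erase j' ⊆ T.1 :=
      (Finset.erase_subset _ _).trans (Finset.erase_subset _ _)
    simp only [G]
    rw [dif_pos hs, map_smul, smul_smul, cechMap_comp]
  rw [Finset.sum_congr rfl key, Finset.sum_sigma']
  simp only [Pi.zero_apply]
  refine Finset.sum_involution (fun a _ => ⟨a.2, a.1⟩) ?_ ?_ ?_ ?_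
  · rintro ⟨j, j'⟩ h
    simp only [Finset.mem_sigma, Finset.mem_erase] at h
    rw [Finset.erase_right_comm (a := j') (b := j), ← add_smul]
    rcases lt_or_gt_of_ne h.2.1 with h1 | h1
    · rw [csgn_swap T.1 j' j h.2.2 h1]; simp
    · rw [csgn_swap T.1 j j' h.1 h1]; simp
  · rintro ⟨j, j'⟩ h _ h2
    simp only [Finset.mem_sigma, Finset.mem_erase] at h
    simp only [Sigma.mk.injEq, heq_eq_eq] at h2
    exact h.2.1 h2.1
  · rintro ⟨j, j'⟩ h
    simp only [Finset.mem_sigma, Finset.mem_erase] at h ⊢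
    exact ⟨h.2.2, fun h' => h.2.1 h'.symm, h.1⟩
  · rintro ⟨j, j'⟩ h
    rfl

lemma cechC_eq_zero {p : ℕ} (hp : n < p) (c : cechC A x M p) : c = 0 := by
  ext T
  have := Finset.card_le_univ T.1
  rw [T.2, Fintype.card_fin] at this
  omega

variable (M) in
/-- Boundaries. -/
def cBd (p : ℕ) : Submodule A (cechC A x M p) := LinearMap.range (cechDprev A x M p)

lemma isBoundary_iff (p : ℕ) (c : cechC A x M p) : cechIsBoundary A x M p c ↔ c ∈ cBd x M p := by
  cases p with
  | zero =>
    simp only [cechIsBoundary, cBd, cechDprev, LinearMap.range_zero, Submodule.mem_bot]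
  | succ q => rfl

lemma cBd_D {p : ℕ} {c : cechC A x M p} (h : c ∈ cBd x M p) : cechD A x M p c = 0 := by
  cases p with
  | zero => obtain ⟨b, rfl⟩ := h; simp [cechDprev]
  | succ q => obtain ⟨b, rfl⟩ := h; exact cechD_D x q b

lemma D_mem_cBd {p : ℕ} (c : cechC A x M p) : cechD A x M p c ∈ cBd x M (p + 1) := ⟨c, rfl⟩

lemma cBd_map (f : M →ₗ[A] N) {p : ℕ} {c : cechC A x M p} (h : c ∈ cBd x M p) :
    cechCmap x f p c ∈ cBd x N p := by
  cases p with
  | zero => obtain ⟨b, rfl⟩ := h; simp [cechDprev]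
  | succ q => obtain ⟨b, rfl⟩ := h; exact ⟨cechCmap x f q b, cechCmap_D x f q b⟩

lemma cBd_lift (g : M →ₗ[A] N) (hg : Function.Surjective g) {p : ℕ} {c : cechC A x N p}
    (h : c ∈ cBd x N p) : ∃ b ∈ cBd x M p, cechCmap x g p b = c := by
  cases p with
  | zero => obtain ⟨b, rfl⟩ := h; exact ⟨0, zero_mem _, by simp [cechDprev]⟩
  | succ q =>
    obtain ⟨b, rfl⟩ := h
    obtain ⟨b', rfl⟩ := cechCmap_surjective x g hg q b
    exact ⟨cechD A x M q b', ⟨b', rfl⟩, (cechCmap_D x g q b').symm⟩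

lemma cBd_lift_exact (f : P →ₗ[A] M) (g : M →ₗ[A] N) (he : Function.Exact f g)
    (hg : Function.Surjective g) {p : ℕ} {c : cechC A x M p}
    (h : cechCmap x g p c ∈ cBd x N p) : ∃ b ∈ cBd x M p, ∃ u, c = b + cechCmap x f p u := by
  obtain ⟨b, hb, hb'⟩ := cBd_lift x g hg h
  have : cechCmap x g p (c - b) = 0 := by rw [map_sub, hb', sub_self]
  obtain ⟨u, hu⟩ := (cechCmap_exact x f g he p _).1 this
  exact ⟨b, hb, u, by rw [hu]; abel⟩

lemma lcVanish_iff (p : ℕ) : lcVanish A x M p ↔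
    ∀ c : cechC A x M p, cechD A x M p c = 0 → c ∈ cBd x M p := by
  unfold lcVanish
  simp only [isBoundary_iff]

end PartOne

noncomputable section PartTwo

variable {A : Type} [CommRing A] {n : ℕ} (x : Fin n → A)

lemma lcV_ext {M N P : Type} [AddCommGroup M] [Module A M] [AddCommGroup N] [Module A N]
    [AddCommGroup P] [Module A P] (f : M →ₗ[A] N) (g : N →ₗ[A] P)
    (hf : Function.Injective f) (hg : Function.Surjective g) (he : Function.Exact f g) (p : ℕ)
    (h1 : lcVanish A x M p) (h2 : lcVanish A x P p) : lcVanish A x N p := by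
  rw [lcVanish_iff] at *
  intro c hc
  have h3 : cechCmap x g p c ∈ cBd x P p := h2 _ (by rw [cechCmap_D, hc, map_zero])
  obtain ⟨b, hb, u, rfl⟩ := cBd_lift_exact x f g he hg h3
  refine add_mem hb (cBd_map x f (h1 u ?_))
  apply cechCmap_injective x f hf
  rw [map_zero, ← cechCmap_D]
  simpa [cBd_D x hb] using hc

lemma lcV_quot {M N P : Type} [AddCommGroup M] [Module A M] [AddCommGroup N] [Module A N]
    [AddCommGroup P] [Module A P] (f : M →ₗ[A] N) (g : N →ₗ[A] P)
    (hf : Function.Injective f) (hg : Function.Surjective g) (he : Function.Exact f g) (p : ℕ)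
    (h1 : lcVanish A x N p) (h2 : lcVanish A x M (p + 1)) : lcVanish A x P p := by
  rw [lcVanish_iff] at *
  intro c hc
  obtain ⟨c, rfl⟩ := cechCmap_surjective x g hg p c
  rw [cechCmap_D] at hc
  obtain ⟨u, hu⟩ := (cechCmap_exact x f g he (p + 1) _).1 hc
  have hu0 : u ∈ cBd x M (p + 1) := by
    refine h2 u (cechCmap_injective x f hf _ ?_)
    rw [map_zero, ← cechCmap_D, hu, cechD_D]
  obtain ⟨b, rfl⟩ := hu0
  change cechCmap x f (p + 1) (cechD A x M p b) = _ at hu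
  rw [← cechCmap_D] at hu
  have h3 : c - cechCmap x f p b ∈ cBd x N p := h1 _ (by rw [map_sub, hu, sub_self])
  have h4 := cBd_map x g h3
  rwa [map_sub, (cechCmap_exact x f g he p _).2 ⟨b, rfl⟩, sub_zero] at h4

lemma lcV_equiv {M N : Type} [AddCommGroup M] [Module A M] [AddCommGroup N] [Module A N]
    (e : M ≃ₗ[A] N) (p : ℕ) (h : lcVanish A x M p) : lcVanish A x N p := by
  rw [lcVanish_iff] at *
  intro c hc
  have h1 := h (cechCmap x e.symm.toLinearMap p c) (by rw [cechCmap_D, hc, map_zero])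
  have h2 := cBd_map x e.toLinearMap h1
  rw [cechCmap_comp] at h2
  simpa [cechCmap_id] using h2

lemma lcV_subsingleton {M : Type} [AddCommGroup M] [Module A M] [Subsingleton M] (p : ℕ) :
    lcVanish A x M p := by
  rw [lcVanish_iff]
  intro c _
  have : c = 0 := by
    rw [← cechCmap_id x p c, Subsingleton.elim (LinearMap.id : M →ₗ[A] M) 0, cechCmap_zero]
  rw [this]; exact zero_mem _

lemma lcV_filtration [IsNoetherianRing A] (p : ℕ) (Z : Set (PrimeSpectrum A))
    (hZ : ∀ q ∈ Z, lcVanish A x (A ⧸ q.asIdeal) p)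
    (W : Type) [AddCommGroup W] [Module A W] [hW : Module.Finite A W]
    (hs : Module.support A W ⊆ Z) : lcVanish A x W p := by
  revert hs
  refine IsNoetherianRing.induction_on_isQuotientEquivQuotientPrime A
    (motive := fun N _ _ _ => Module.support A N ⊆ Z → lcVanish A x N p) hW ?_ ?_ ?_
  · intro N _ _ _ _ _
    exact lcV_subsingleton x p
  · intro N _ _ _ q e hN
    refine lcV_equiv x e.symm p (hZ q (hN ?_))
    rw [e.support_eq, Module.support_eq_zeroLocus, Ideal.annihilator_quotient, PrimeSpectrum.mem_zeroLocus]
  · intro N₁ _ _ _ N₂ _ _ _ N₃ _ _ _ f g hf hg he h1 h3 h2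
    rw [Module.support_of_exact he hf hg, Set.union_subset_iff] at h2
    exact lcV_ext x f g hf hg he p (h1 h2.1) (h3 h2.2)

lemma exists_hom_quot [IsNoetherianRing A] (T : Type) [AddCommGroup T] [Module A T]
    [Module.Finite A T] (q : PrimeSpectrum A) (hq : q ∈ Module.support A T) :
    ∃ f : T →ₗ[A] (A ⧸ q.asIdeal), f ≠ 0 := by
  classical
  rw [Module.mem_support_iff_nontrivial_residueField_tensorProduct] at hq
  let κ := q.asIdeal.ResidueField
  obtain ⟨v, hv⟩ := exists_ne (0 : TensorProduct A κ T)
  obtain ⟨φ, hφ⟩ : ∃ φ : Module.Dual κ (TensorProduct A κ T), φ v ≠ 0 := by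
    by_contra! h
    exact hv ((Module.forall_dual_apply_eq_zero_iff κ v).1 h)
  let g : T →ₗ[A] κ := (φ.restrictScalars A) ∘ₗ (TensorProduct.mk A κ T 1)
  have hg : ∃ t, g t ≠ 0 := by
    by_contra! h
    apply hφ
    have : φ = 0 := by
      ext t
      exact h t
    rw [this]; rfl
  obtain ⟨t0, ht0⟩ := hg
  obtain ⟨s, hs⟩ := (Module.Finite.fg_top (R := A) (M := T))
  obtain ⟨b, hb⟩ := IsLocalization.exist_integer_multiples_of_finset
    (nonZeroDivisors (A ⧸ q.asIdeal)) (S := κ) (s.image g)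
  obtain ⟨b, hb0⟩ := b
  obtain ⟨a, rfl⟩ := Ideal.Quotient.mk_surjective b
  let i : (A ⧸ q.asIdeal) →ₗ[A] κ := (Algebra.linearMap (A ⧸ q.asIdeal) κ).restrictScalars A
  have hi : Function.Injective i := IsFractionRing.injective (A ⧸ q.asIdeal) κ
  have hr : ∀ t, (a • g) t ∈ LinearMap.range i := by
    have : (⊤ : Submodule A T) ≤ (LinearMap.range i).comap (a • g) := by
      rw [← hs, Submodule.span_le]
      intro t ht
      obtain ⟨c, hc⟩ := hb (g t) (Finset.mem_image_of_mem g ht)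
      refine ⟨c, hc.trans ?_⟩
      simp only [LinearMap.smul_apply]
      exact (algebraMap_smul (A ⧸ q.asIdeal) a (g t))
    intro t; exact this trivial
  refine ⟨(LinearEquiv.ofInjective i hi).symm.toLinearMap ∘ₗ (a • g).codRestrict _ hr, ?_⟩
  intro h0
  have h1 := LinearMap.congr_fun h0 t0
  simp only [LinearMap.comp_apply, LinearEquiv.coe_coe, LinearMap.zero_apply,
    LinearEquiv.map_eq_zero_iff] at h1
  have h2 : a • g t0 = 0 := congrArg Subtype.val h1
  have h3 : algebraMap (A ⧸ q.asIdeal) κ (Ideal.Quotient.mk _ a) * g t0 = 0 := by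
    rw [← Algebra.smul_def, ← h2]
    exact algebraMap_smul (A ⧸ q.asIdeal) a (g t0)
  rcases mul_eq_zero.1 h3 with h | h
  · have : Ideal.Quotient.mk q.asIdeal a = 0 :=
      IsFractionRing.injective (A ⧸ q.asIdeal) κ (by rw [h, map_zero])
    exact nonZeroDivisors.ne_zero hb0 this
  · exact ht0 h

/-- Cohomological dimension only depends on the support (upper bound). -/
theorem lcV_support [IsNoetherianRing A] (T : Type) [AddCommGroup T] [Module A T]
    [Module.Finite A T] (c : ℕ) (hT : ∀ p, c ≤ p → lcVanish A x T p) :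
    ∀ (k p : ℕ), n + 1 ≤ p + k → c ≤ p → ∀ (W : Type) [AddCommGroup W] [Module A W]
      [Module.Finite A W], Module.support A W ⊆ Module.support A T → lcVanish A x W p := by
  intro k
  induction k with
  | zero =>
    intro p hp _ W _ _ _ _
    rw [lcVanish_iff]
    intro c _
    rw [cechC_eq_zero x (by omega) c]; exact zero_mem _
  | succ k ih =>
    intro p hp hcp
    have ih' := ih (p + 1) (by omega) (by omega)
    have key : ∀ I : Ideal A, ∀ q : PrimeSpectrum A, q.asIdeal = I → q ∈ Module.support A T →
        lcVanish A x (A ⧸ q.asIdeal) p := by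
      intro I
      induction I using WellFoundedGT.induction with
      | ind I IH =>
        rintro q rfl hq
        obtain ⟨f, hf⟩ := exists_hom_quot T q hq
        let J := LinearMap.range f
        have hJ : lcVanish A x J p := by
          refine lcV_quot x (LinearMap.ker f).subtype f.rangeRestrict (Submodule.subtype_injective _)
            f.surjective_rangeRestrict ?_ p (hT p hcp) (ih' _ ?_)
          · intro y
            simp [Subtype.ext_iff]
          · exact Module.support_subset_of_injective _ (Submodule.subtype_injective _)
        refine lcV_ext x J.subtype J.mkQ (Submodule.subtype_injective _) (Submodule.mkQ_surjective _)
          (LinearMap.exact_subtype_mkQ J) p hJ ?_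
        refine lcV_filtration x p {r | q.asIdeal < r.asIdeal ∧ r ∈ Module.support A T} ?_ _ ?_
        · intro r hr
          exact IH r.asIdeal hr.1 r rfl hr.2
        · intro r hr
          have h1 : q.asIdeal ≤ r.asIdeal := by
            have := Module.support_subset_of_surjective _ (Submodule.mkQ_surjective J) hr
            rw [Module.support_eq_zeroLocus, Ideal.annihilator_quotient, PrimeSpectrum.mem_zeroLocus] at this
            exact this
          refine ⟨lt_of_le_of_ne h1 ?_, Module.mem_support_mono (show q ≤ r from h1) hq⟩
          intro heq
          obtain ⟨t, ht⟩ : ∃ t, f t ≠ 0 := by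
            by_contra! h; exact hf (LinearMap.ext h)
          obtain ⟨a, ha⟩ := Ideal.Quotient.mk_surjective (f t)
          have haq : a ∉ q.asIdeal := by
            intro h; apply ht; rw [← ha]; exact Ideal.Quotient.eq_zero_iff_mem.2 h
          apply haq
          rw [heq]
          apply Module.annihilator_le_of_mem_support hr
          rw [Module.mem_annihilator]
          intro m
          obtain ⟨m, rfl⟩ := Submodule.mkQ_surjective J m
          obtain ⟨b, rfl⟩ := Ideal.Quotient.mk_surjective m
          rw [← map_smul]
          change Submodule.Quotient.mk _ = _
          rw [Submodule.Quotient.mk_eq_zero]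
          refine ⟨b • t, ?_⟩
          rw [map_smul, ← ha]
          change Ideal.Quotient.mk _ (b * a) = Ideal.Quotient.mk _ (a * b)
          rw [mul_comm]
    intro W _ _ _ hW
    exact lcV_filtration x p (Module.support A T) (fun q hq => key _ q rfl hq) W hW

end PartTwo

noncomputable section PartThree

variable {R : Type} [CommRing R] {A : Type} [CommRing A] [Algebra R A]
variable {M : Type} [AddCommGroup M] [Module R M] [Module A M] [IsScalarTower R A M]

section tm
variable {L L' L'' : Type} [AddCommGroup L] [Module R L] [AddCommGroup L'] [Module R L']
  [AddCommGroup L''] [Module R L'']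

variable (A M) in
/-- The map induced on `M ⊗ -`. -/
def tm (f : L →ₗ[R] L') : TensorProduct R M L →ₗ[A] TensorProduct R M L' :=
  TensorProduct.AlgebraTensorModule.map (LinearMap.id : M →ₗ[A] M) f

@[simp] lemma tm_tmul (f : L →ₗ[R] L') (m : M) (l : L) :
    tm A M f (m ⊗ₜ l) = m ⊗ₜ f l := rfl

lemma tm_eq (f : L →ₗ[R] L') (z : TensorProduct R M L) : tm A M f z = f.lTensor M z := rfl

lemma tm_comp (f : L →ₗ[R] L') (g : L' →ₗ[R] L'') (z : TensorProduct R M L) :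
    tm A M g (tm A M f z) = tm A M (g ∘ₗ f) z := by
  simp only [tm_eq, LinearMap.lTensor_comp, LinearMap.comp_apply]

lemma tm_zero (z : TensorProduct R M L) : tm A M (0 : L →ₗ[R] L') z = 0 := by
  simp [tm_eq]

lemma tm_id (z : TensorProduct R M L) : tm A M (LinearMap.id : L →ₗ[R] L) z = z := by
  simp [tm_eq]

lemma tm_neg (f : L →ₗ[R] L') (z : TensorProduct R M L) : tm A M (-f) z = - tm A M f z := by
  simp [tm_eq]

lemma tm_add (f g : L →ₗ[R] L') (z : TensorProduct R M L) :
    tm A M (f + g) z = tm A M f z + tm A M g z := by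
  simp [tm_eq, LinearMap.lTensor_add]

lemma tm_smul (r : R) (z : TensorProduct R M L) :
    tm A M (r • (LinearMap.id : L →ₗ[R] L)) z = algebraMap R A r • z := by
  simp [tm_eq, LinearMap.lTensor_smul]

lemma tm_exact (f : L →ₗ[R] L') (g : L' →ₗ[R] L'') (h : Function.Exact f g)
    (hg : Function.Surjective g) : Function.Exact (tm A M f) (tm A M g) :=
  lTensor_exact M h hg

lemma tm_surj (f : L →ₗ[R] L') (h : Function.Surjective f) : Function.Surjective (tm A M f) :=
  LinearMap.lTensor_surjective M h

variable (M) in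
/-- injectivity after tensoring with `M` and localizing at `P`. -/
def PInj (P : Ideal A) (f : L →ₗ[R] L') : Prop :=
  ∀ z : TensorProduct R M L, tm A M f z = 0 → ∃ s, s ∉ P ∧ s • z = 0

lemma PInj.comp {P : Ideal A} (hP : P.IsPrime) {f : L →ₗ[R] L'} {g : L' →ₗ[R] L''}
    (hg : PInj M P g) (hf : PInj M P f) : PInj M P (g ∘ₗ f) := by
  intro z hz
  rw [← tm_comp] at hz
  obtain ⟨s, hs, h1⟩ := hg _ hz
  rw [← map_smul] at h1
  obtain ⟨t, ht, h2⟩ := hf _ h1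
  refine ⟨t * s, fun h => (hP.mem_or_mem h).elim ht hs, by rw [mul_smul, h2]⟩

lemma PInj.of_bij {P : Ideal A} (hP : P.IsPrime) {f : L →ₗ[R] L'} (hf : Function.Bijective f) :
    PInj M P f := by
  intro z hz
  refine ⟨1, fun h => hP.ne_top ((Ideal.eq_top_iff_one P).2 h), ?_⟩
  let e := LinearEquiv.ofBijective f hf
  have : tm A M (e.symm : L' →ₗ[R] L) (tm A M f z) = z := by
    rw [tm_comp]
    have : (e.symm : L' →ₗ[R] L) ∘ₗ f = LinearMap.id := by
      ext y; exact e.symm_apply_apply y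
    rw [this, tm_id]
  rw [← this, hz]; simp

end tm

section res
variable [IsLocalRing R]
variable {F : ℕ → Type} [∀ q, AddCommGroup (F q)] [∀ q, Module R (F q)]
    [∀ q, Module.Free R (F q)]
    {dF : ∀ q : ℕ, F (q + 1) →ₗ[R] F q}
    {ε : F 0 →ₗ[R] (R ⧸ IsLocalRing.maximalIdeal R)}

lemma exists_phi (ε : F 0 →ₗ[R] (R ⧸ IsLocalRing.maximalIdeal R)) :
    ∃ φ : F 0 →ₗ[R] R, ∀ y, Ideal.Quotient.mk (IsLocalRing.maximalIdeal R) (φ y) = ε y := by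
  obtain ⟨φ, h⟩ := Module.projective_lifting_property
    (Submodule.mkQ (IsLocalRing.maximalIdeal R)) ε (Submodule.mkQ_surjective _)
  exact ⟨φ, fun y => LinearMap.congr_fun h y⟩

lemma PInj_A (hexact : ∀ q : ℕ, Function.Exact (dF (q + 1)) (dF q))
    (hexact0 : Function.Exact (dF 0) ε) (hsurj : Function.Surjective ε)
    {P : Ideal A} (hP : P.IsPrime)
    (H : ∀ z : TensorProduct R M (F 1), tm A M (dF 0) z = 0 →
      ∃ s, s ∉ P ∧ ∃ y, s • z = tm A M (dF 1) y)
    {L L' : Type} [AddCommGroup L] [Module R L] [AddCommGroup L'] [Module R L']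
    (f : L' →ₗ[R] L) (hf : Function.Injective f) (v : L)
    (hv : ∀ r ∈ IsLocalRing.maximalIdeal R, ∃ l', f l' = r • v)
    (hL : ∀ l : L, ∃ l', ∃ r : R, l = f l' + r • v) : PInj M P f := by
  by_cases hvf : ∃ l', f l' = v
  · refine PInj.of_bij hP ⟨hf, ?_⟩
    intro l
    obtain ⟨l', r, rfl⟩ := hL l
    obtain ⟨l'', rfl⟩ := hvf
    exact ⟨l' + r • l'', by simp⟩
  obtain ⟨φ, hφ⟩ := exists_phi ε
  have hφm : ∀ y, ε y = 0 → φ y ∈ IsLocalRing.maximalIdeal R := by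
    intro y hy
    rw [← Ideal.Quotient.eq_zero_iff_mem, hφ, hy]
  have hε : ∀ u, ε (dF 0 u) = 0 := fun u => hexact0.apply_apply_eq_zero u
  let g1 : F 1 →ₗ[R] L := (LinearMap.toSpanSingleton R L v) ∘ₗ φ ∘ₗ dF 0
  have hg1 : ∀ u, g1 u ∈ LinearMap.range f := by
    intro u
    obtain ⟨l', h⟩ := hv _ (hφm _ (hε u))
    exact ⟨l', h⟩
  let Ψ : F 1 →ₗ[R] L' := (LinearEquiv.ofInjective f hf).symm.toLinearMap ∘ₗ
    LinearMap.codRestrict (LinearMap.range f) g1 hg1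
  have hΨ : ∀ u, f (Ψ u) = φ (dF 0 u) • v := by
    intro u
    have : (LinearEquiv.ofInjective f hf (Ψ u)) = ⟨g1 u, hg1 u⟩ := by
      simp only [Ψ, LinearMap.comp_apply, LinearEquiv.coe_coe, LinearEquiv.apply_symm_apply]
      rfl
    exact congrArg Subtype.val this
  have hΨd : Ψ ∘ₗ dF 1 = 0 := by
    ext y
    apply hf
    rw [LinearMap.comp_apply, hΨ, (hexact 0).apply_apply_eq_zero]
    simp
  let α : F 1 →ₗ[R] L' × F 0 := LinearMap.prod Ψ (-(dF 0))
  let β : L' × F 0 →ₗ[R] L := LinearMap.coprod f ((LinearMap.toSpanSingleton R L v) ∘ₗ φ)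
  have hα : ∀ u, α u = (Ψ u, - dF 0 u) := fun u => rfl
  have hβ : ∀ a b, β (a, b) = f a + φ b • v := fun a b => by simp [β]
  have hβs : Function.Surjective β := by
    intro l
    obtain ⟨l', r, rfl⟩ := hL l
    obtain ⟨y, hy⟩ := hsurj (Ideal.Quotient.mk _ r)
    have : r - φ y ∈ IsLocalRing.maximalIdeal R := by
      rw [← Ideal.Quotient.eq_zero_iff_mem, map_sub, hφ, hy, sub_self]
    obtain ⟨l'', h⟩ := hv _ this
    refine ⟨(l' + l'', y), ?_⟩
    rw [hβ, map_add, h, sub_smul]; abel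
  have hex : Function.Exact α β := by
    rintro ⟨a, y⟩
    constructor
    · intro h
      rw [hβ] at h
      have hy : ε y = 0 := by
        by_contra hne
        have hu : IsUnit (φ y) := by
          by_contra hnu
          apply hne
          rw [← hφ, Ideal.Quotient.eq_zero_iff_mem]
          exact hnu
        obtain ⟨u, hu⟩ := hu
        apply hvf
        refine ⟨- ((↑u⁻¹ : R) • a), ?_⟩
        have : f a = - ((u : R) • v) := by rw [hu]; exact eq_neg_of_add_eq_zero_left h
        rw [map_neg, map_smul, this, smul_neg, neg_neg, smul_smul]; simp
      obtain ⟨u, rfl⟩ := (hexact0 y).1 hy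
      refine ⟨-u, ?_⟩
      ext
      · apply hf
        rw [map_neg, hα, Prod.fst_neg, map_neg, hΨ]
        exact (eq_neg_of_add_eq_zero_left h).symm
      · rw [map_neg, hα]; simp
    · rintro ⟨u, hu⟩
      rw [← hu]
      rw [hα, hβ, hΨ]; simp
  intro z hz
  have h1 : tm A M β (tm A M (LinearMap.inl R L' (F 0)) z) = 0 := by
    rw [tm_comp]
    have : β ∘ₗ LinearMap.inl R L' (F 0) = f := by ext; simp [β]
    rw [this, hz]
  obtain ⟨u, hu⟩ := (tm_exact α β hex hβs _).1 h1
  have h2 : tm A M Ψ u = z := by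
    have := congrArg (tm A M (LinearMap.fst R L' (F 0))) hu
    rw [tm_comp, tm_comp] at this
    have e1 : LinearMap.fst R L' (F 0) ∘ₗ α = Ψ := by ext; simp [α]
    have e2 : LinearMap.fst R L' (F 0) ∘ₗ LinearMap.inl R L' (F 0) = LinearMap.id := by
      ext; simp
    rw [e1, e2, tm_id] at this
    exact this
  have h3 : tm A M (dF 0) u = 0 := by
    have := congrArg (tm A M (LinearMap.snd R L' (F 0))) hu
    rw [tm_comp, tm_comp] at this
    have e1 : LinearMap.snd R L' (F 0) ∘ₗ α = -(dF 0) := by ext; simp [α]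
    have e2 : LinearMap.snd R L' (F 0) ∘ₗ LinearMap.inl R L' (F 0) = 0 := by
      ext; simp
    rw [e1, e2, tm_zero, tm_neg] at this
    exact neg_eq_zero.1 this
  obtain ⟨s, hs, y, hy⟩ := H u h3
  refine ⟨s, hs, ?_⟩
  rw [← h2, ← map_smul, hy, tm_comp, hΨd, tm_zero]

lemma PInj_B {P : Ideal A} (hP : P.IsPrime)
    (HA : ∀ (L L' : Type) [AddCommGroup L] [Module R L] [AddCommGroup L'] [Module R L']
      (f : L' →ₗ[R] L) (_ : Function.Injective f) (v : L)
      (_ : ∀ r ∈ IsLocalRing.maximalIdeal R, ∃ l', f l' = r • v)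
      (_ : ∀ l : L, ∃ l', ∃ r : R, l = f l' + r • v), PInj M P f)
    {Φ : Type} [AddCommGroup Φ] [Module R Φ] (K : Submodule R Φ) (t : Finset Φ)
    (h : ∀ v ∈ t, ∀ r ∈ IsLocalRing.maximalIdeal R, r • v ∈ K)
    (K' : Submodule R Φ) (hK' : K' = K ⊔ Submodule.span R t) (hle : K ≤ K') :
    PInj M P (Submodule.inclusion hle) := by
  classical
  induction t using Finset.induction_on generalizing K' with
  | empty =>
    refine PInj.of_bij hP ⟨Submodule.inclusion_injective _, ?_⟩
    have : K' = K := by simp [hK']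
    subst this
    intro y; exact ⟨y, rfl⟩
  | insert v t hv ih =>
    have i1 := ih (fun v hv => h v (Finset.mem_insert_of_mem hv)) (K ⊔ Submodule.span R t) rfl
      le_sup_left
    have hle2 : K ⊔ Submodule.span R t ≤ K' := by
      rw [hK']; exact sup_le_sup_left (Submodule.span_mono (by simp)) _
    have hvK : v ∈ K' := by
      rw [hK']; exact Submodule.mem_sup_right (Submodule.subset_span (by simp))
    have i2 : PInj M P (Submodule.inclusion hle2) := by
      refine HA _ _ _ (Submodule.inclusion_injective _) ⟨v, hvK⟩ ?_ ?_
      · intro r hr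
        exact ⟨⟨r • v, Submodule.mem_sup_left (h v (by simp) r hr)⟩, rfl⟩
      · rintro ⟨l, hl⟩
        rw [hK', Finset.coe_insert, Submodule.span_insert, sup_comm (Submodule.span R {v}),
          ← sup_assoc] at hl
        obtain ⟨a, ha, b, hb, rfl⟩ := Submodule.mem_sup.1 hl
        obtain ⟨r, rfl⟩ := Submodule.mem_span_singleton.1 hb
        exact ⟨⟨a, ha⟩, r, rfl⟩
    have e : Submodule.inclusion hle =
      Submodule.inclusion hle2 ∘ₗ Submodule.inclusion le_sup_left := rfl
    rw [e]
    exact PInj.comp hP i2 i1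

lemma PInj_C {P : Ideal A} (hP : P.IsPrime)
    (HA : ∀ (L L' : Type) [AddCommGroup L] [Module R L] [AddCommGroup L'] [Module R L']
      (f : L' →ₗ[R] L) (_ : Function.Injective f) (v : L)
      (_ : ∀ r ∈ IsLocalRing.maximalIdeal R, ∃ l', f l' = r • v)
      (_ : ∀ l : L, ∃ l', ∃ r : R, l = f l' + r • v), PInj M P f)
    {Φ : Type} [AddCommGroup Φ] [Module R Φ] [IsNoetherian R Φ] (t : ℕ) (J : Submodule R Φ)
    (hJ : IsLocalRing.maximalIdeal R ^ t • (⊤ : Submodule R Φ) ≤ J) : PInj M P J.subtype := by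
  induction t generalizing J with
  | zero =>
    refine PInj.of_bij hP ⟨J.injective_subtype, fun y => ⟨⟨y, hJ (by simp)⟩, rfl⟩⟩
  | succ t ih =>
    obtain ⟨g, hg⟩ := IsNoetherian.noetherian (IsLocalRing.maximalIdeal R ^ t • (⊤ : Submodule R Φ))
    have i1 := ih (J ⊔ IsLocalRing.maximalIdeal R ^ t • (⊤ : Submodule R Φ)) le_sup_right
    have i2 := PInj_B hP HA J g (fun v hv r hr => hJ (by
      rw [pow_succ', Submodule.mul_smul]
      exact Submodule.smul_mem_smul hr (hg ▸ Submodule.subset_span hv))) _ rfl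
    rw [hg] at i2
    have e : J.subtype = (J ⊔ IsLocalRing.maximalIdeal R ^ t • (⊤ : Submodule R Φ)).subtype ∘ₗ
      Submodule.inclusion le_sup_left := rfl
    rw [e]
    exact PInj.comp hP i1 (i2 le_sup_left)

end res

section fin
variable {L : Type} [AddCommGroup L] [Module R L]

variable (A M L) in
lemma finite_tens [Module.Finite A M] [Module.Finite R L] :
    Module.Finite A (TensorProduct R M L) :=
  Module.Finite.equiv (TensorProduct.AlgebraTensorModule.cancelBaseChange R A A M L)

variable (A M L) in
lemma PInj_pow (I : Ideal R) (t : ℕ) {K : Submodule R L}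
    (hK : K ≤ I ^ t • (⊤ : Submodule R L)) (z : TensorProduct R M K) :
    tm A M K.subtype z ∈ (I.map (algebraMap R A)) ^ t • (⊤ : Submodule A (TensorProduct R M L)) := by
  induction z using TensorProduct.induction_on with
  | zero => simp
  | add a b ha hb => rw [map_add]; exact add_mem ha hb
  | tmul m k =>
    obtain ⟨k, hk⟩ := k
    have h2 := hK hk
    simp only [tm_tmul, Submodule.subtype_apply]
    refine Submodule.smul_induction_on (p := fun k => m ⊗ₜ[R] k ∈
      (I.map (algebraMap R A)) ^ t • (⊤ : Submodule A (TensorProduct R M L))) h2 ?_ ?_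
    · intro r hr y _
      have : m ⊗ₜ[R] (r • y) = algebraMap R A r • (m ⊗ₜ[R] y) := by
        rw [algebraMap_smul, TensorProduct.tmul_smul]
      rw [this]
      refine Submodule.smul_mem_smul ?_ trivial
      rw [← Ideal.map_pow]
      exact Ideal.mem_map_of_mem _ hr
    · intro a b ha hb
      rw [TensorProduct.tmul_add]; exact add_mem ha hb

lemma krull_P [IsNoetherianRing A] {W : Type} [AddCommGroup W] [Module A W] [Module.Finite A W]
    {P : Ideal A} (hP : P.IsPrime) (x : W)
    (h : ∀ t : ℕ, ∃ s, s ∉ P ∧ s • x ∈ P ^ t • (⊤ : Submodule A W)) :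
    ∃ s, s ∉ P ∧ s • x = 0 := by
  have key : LocalizedModule.mkLinearMap P.primeCompl W x = 0 := by
    have hb := Ideal.iInf_pow_smul_eq_bot_of_isLocalRing
      (M := LocalizedModule P.primeCompl W)
      (IsLocalRing.maximalIdeal (Localization P.primeCompl))
      (IsLocalRing.maximalIdeal.isMaximal _).ne_top
    rw [← Submodule.mem_bot (Localization P.primeCompl), ← hb, Submodule.mem_iInf]
    intro t
    obtain ⟨s, hs, hx⟩ := h t
    have hu : IsUnit (algebraMap A (Localization P.primeCompl) s) :=
      IsLocalization.map_units _ (⟨s, hs⟩ : P.primeCompl)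
    rw [← Submodule.smul_mem_iff_of_isUnit _ hu, algebraMap_smul, ← map_smul]
    refine Submodule.smul_induction_on (p := fun y => LocalizedModule.mkLinearMap P.primeCompl W y ∈
      IsLocalRing.maximalIdeal (Localization P.primeCompl) ^ t •
        (⊤ : Submodule (Localization P.primeCompl) (LocalizedModule P.primeCompl W))) hx ?_ ?_
    · intro r hr y hy
      rw [map_smul, ← algebraMap_smul (Localization P.primeCompl) r]
      refine Submodule.smul_mem_smul ?_ trivial
      have := Ideal.mem_map_of_mem (algebraMap A (Localization P.primeCompl)) hr
      rw [Ideal.map_pow] at this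
      have e : P.map (algebraMap A (Localization P.primeCompl)) =
        IsLocalRing.maximalIdeal (Localization P.primeCompl) := Localization.AtPrime.map_eq_maximalIdeal
      rwa [e] at this
    · intro a b ha hb
      rw [map_add]; exact add_mem ha hb
  rw [← LinearMap.mem_ker, LocalizedModule.mem_ker_mkLinearMap_iff] at key
  obtain ⟨s, hs, h⟩ := key
  exact ⟨s, hs, h⟩

end fin


section rig
variable [IsLocalRing R] [IsNoetherianRing R] [IsNoetherianRing A] [Module.Finite A M]

lemma PInj_D {P : Ideal A} (hP : P.IsPrime)
    (hmP : (IsLocalRing.maximalIdeal R).map (algebraMap R A) ≤ P)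
    (HA : ∀ (L L' : Type) [AddCommGroup L] [Module R L] [AddCommGroup L'] [Module R L']
      (f : L' →ₗ[R] L) (_ : Function.Injective f) (v : L)
      (_ : ∀ r ∈ IsLocalRing.maximalIdeal R, ∃ l', f l' = r • v)
      (_ : ∀ l : L, ∃ l', ∃ r : R, l = f l' + r • v), PInj M P f)
    {Φ : Type} [AddCommGroup Φ] [Module R Φ] [Module.Finite R Φ] (K : Submodule R Φ) :
    PInj M P K.subtype := by
  intro x hx
  haveI := finite_tens (R := R) A M K
  refine krull_P hP x fun t => ?_
  obtain ⟨c, hc⟩ := Ideal.exists_pow_inf_eq_pow_smul (IsLocalRing.maximalIdeal R) K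
  set N : Submodule R Φ := IsLocalRing.maximalIdeal R ^ (t + c) • (⊤ : Submodule R Φ) with hN
  have h1 := PInj_C hP HA (t + c) (K ⊔ N) le_sup_right
    (tm A M (Submodule.inclusion le_sup_left) x) (by rw [tm_comp]; exact hx)
  obtain ⟨s, hs, h1⟩ := h1
  refine ⟨s, hs, ?_⟩
  rw [← map_smul] at h1
  let e := LinearMap.quotientInfEquivSupQuotient K N
  have h2 : tm A M (Submodule.mkQ (Submodule.comap K.subtype K ⊓ Submodule.comap K.subtype N)) (s • x) = 0 := by
    have : Submodule.mkQ (Submodule.comap K.subtype K ⊓ Submodule.comap K.subtype N) =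
      (e.symm.toLinearMap ∘ₗ Submodule.mkQ (Submodule.comap (K ⊔ N).subtype N)) ∘ₗ
        Submodule.inclusion le_sup_left := by
      refine LinearMap.ext fun y => ?_
      exact (LinearEquiv.eq_symm_apply e).2 rfl
    rw [this, ← tm_comp, h1, map_zero]
  obtain ⟨u, hu⟩ := (tm_exact _ _ (LinearMap.exact_subtype_mkQ _)
    (Submodule.mkQ_surjective _) _).1 h2
  rw [← hu]
  refine (Submodule.smul_mono_left (Ideal.pow_right_mono hmP t)) (PInj_pow A M K _ t ?_ u)
  rintro ⟨k, hk⟩ hk2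
  have h3 : k ∈ N ⊓ K := ⟨hk2.2, hk⟩
  have h4 := hc (t + c) (by omega)
  rw [hN, h4, Nat.add_sub_cancel] at h3
  have h5 : k ∈ IsLocalRing.maximalIdeal R ^ t • K :=
    Submodule.smul_mono le_rfl inf_le_right h3
  have h6 : (IsLocalRing.maximalIdeal R ^ t • K) =
      Submodule.map K.subtype (IsLocalRing.maximalIdeal R ^ t • (⊤ : Submodule R K)) := by
    rw [Submodule.map_smul'', Submodule.map_top, Submodule.range_subtype]
  rw [h6] at h5
  obtain ⟨k', hk', rfl⟩ := h5
  exact hk'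

variable {F : ℕ → Type} [∀ q, AddCommGroup (F q)] [∀ q, Module R (F q)]
    [∀ q, Module.Free R (F q)] [∀ q, Module.Finite R (F q)]
    {dF : ∀ q : ℕ, F (q + 1) →ₗ[R] F q}
    {ε : F 0 →ₗ[R] (R ⧸ IsLocalRing.maximalIdeal R)}

lemma rig_E (hexact : ∀ q : ℕ, Function.Exact (dF (q + 1)) (dF q))
    {P : Ideal A} (hP : P.IsPrime) (q : ℕ)
    (HD : ∀ (K : Submodule R (F q)), PInj M P K.subtype)
    (z : TensorProduct R M (F (q + 1))) (hz : tm A M (dF q) z = 0) :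
    ∃ s, s ∉ P ∧ ∃ y, s • z = tm A M (dF (q + 1)) y := by
  have h1 := HD (LinearMap.range (dF q)) (tm A M (dF q).rangeRestrict z)
    (by rw [tm_comp]; exact hz)
  obtain ⟨s, hs, h1⟩ := h1
  rw [← map_smul] at h1
  have hex : Function.Exact (dF (q + 1)) (dF q).rangeRestrict := by
    intro y
    rw [← hexact q y, Subtype.ext_iff]
    rfl
  obtain ⟨y, hy⟩ := (tm_exact _ _ hex (LinearMap.surjective_rangeRestrict _) _).1 h1
  exact ⟨s, hs, y, hy.symm⟩

lemma lift_exact {L : Type} [AddCommGroup L] [Module R L] [Module.Free R L]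
    {L₁ L₂ L₃ : Type} [AddCommGroup L₁] [Module R L₁] [AddCommGroup L₂] [Module R L₂]
    [AddCommGroup L₃] [Module R L₃] (f : L₁ →ₗ[R] L₂) (g : L₂ →ₗ[R] L₃)
    (h : Function.Exact f g) (u : L →ₗ[R] L₂) (hu : ∀ y, g (u y) = 0) :
    ∃ s : L →ₗ[R] L₁, ∀ y, f (s y) = u y := by
  obtain ⟨s, hs⟩ := Module.projective_lifting_property f.rangeRestrict
    (LinearMap.codRestrict (LinearMap.range f) u (fun y => (h _).1 (hu y)))
    (LinearMap.surjective_rangeRestrict _)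
  refine ⟨s, fun y => ?_⟩
  exact congrArg Subtype.val (LinearMap.congr_fun hs y)

lemma homotopy (hexact : ∀ q : ℕ, Function.Exact (dF (q + 1)) (dF q))
    (hexact0 : Function.Exact (dF 0) ε) (r : R) (hr : r ∈ IsLocalRing.maximalIdeal R) (q : ℕ) :
    ∃ (s : F q →ₗ[R] F (q + 1)) (s' : F (q + 1) →ₗ[R] F (q + 2)),
      ∀ y, dF (q + 1) (s' y) + s (dF q y) = r • y := by
  induction q with
  | zero =>
    obtain ⟨s, hs⟩ := lift_exact _ _ hexact0 (r • (LinearMap.id : F 0 →ₗ[R] F 0)) (by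
      intro y
      rw [LinearMap.smul_apply, map_smul, LinearMap.id_apply]
      obtain ⟨a, ha⟩ := Ideal.Quotient.mk_surjective (ε y)
      rw [← ha, ← Ideal.Quotient.mk_eq_mk, ← Submodule.Quotient.mk_smul,
        Submodule.Quotient.mk_eq_zero]
      exact Ideal.mul_mem_right _ _ hr)
    obtain ⟨s', hs'⟩ := lift_exact _ _ (hexact 0)
      (r • (LinearMap.id : F 1 →ₗ[R] F 1) - s ∘ₗ dF 0) (by
      intro y
      simp [hs])
    exact ⟨s, s', fun y => by rw [hs']; simp⟩
  | succ q ih =>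
    obtain ⟨s, s', h⟩ := ih
    obtain ⟨s'', hs''⟩ := lift_exact _ _ (hexact (q + 1))
      (r • (LinearMap.id : F (q + 2) →ₗ[R] F (q + 2)) - s' ∘ₗ dF (q + 1)) (by
      intro y
      have := h (dF (q + 1) y)
      rw [(hexact q).apply_apply_eq_zero, map_zero, add_zero] at this
      simp [this])
    exact ⟨s', s'', fun y => by rw [hs'']; simp⟩

/-- Rigidity at a prime. -/
lemma rigidity (hexact : ∀ q : ℕ, Function.Exact (dF (q + 1)) (dF q))
    (hexact0 : Function.Exact (dF 0) ε) (hsurj : Function.Surjective ε)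
    {P : Ideal A} (hP : P.IsPrime)
    (H : ∀ z : TensorProduct R M (F 1), tm A M (dF 0) z = 0 →
      ∃ s, s ∉ P ∧ ∃ y, s • z = tm A M (dF 1) y) (q : ℕ)
    (z : TensorProduct R M (F (q + 1))) (hz : tm A M (dF q) z = 0) :
    ∃ s, s ∉ P ∧ ∃ y, s • z = tm A M (dF (q + 1)) y := by
  by_cases hmP : (IsLocalRing.maximalIdeal R).map (algebraMap R A) ≤ P
  · exact rig_E hexact hP q (PInj_D hP hmP (fun L L' _ _ _ _ => PInj_A hexact hexact0 hsurj hP H)) z hz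
  · rw [Ideal.map_le_iff_le_comap, SetLike.not_le_iff_exists] at hmP
    obtain ⟨r, hr, hrP⟩ := hmP
    obtain ⟨s, s', h⟩ := homotopy hexact hexact0 r hr q
    refine ⟨algebraMap R A r, hrP, tm A M s' z, ?_⟩
    have e : r • (LinearMap.id : F (q + 1) →ₗ[R] F (q + 1)) = dF (q + 1) ∘ₗ s' + s ∘ₗ dF q := by
      ext y; exact (h y).symm
    rw [← tm_smul, e, tm_add, ← tm_comp, ← tm_comp (dF q), hz, map_zero, add_zero]

variable (A M dF) in
lemma torMod_finite (q : ℕ) : Module.Finite A (torMod R A M F dF q) := by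
  haveI := finite_tens (R := R) A M (F q)
  haveI : IsNoetherian A (TensorProduct R M (F q)) := isNoetherian_of_isNoetherianRing_of_finite _ _
  unfold torMod
  infer_instance

variable (A M dF) in
lemma torMod_notMem (q : ℕ) (p : PrimeSpectrum A) :
    p ∉ Module.support A (torMod R A M F dF (q + 1)) ↔
    ∀ z : TensorProduct R M (F (q + 1)), tm A M (dF q) z = 0 →
      ∃ s, s ∉ p.asIdeal ∧ ∃ y, s • z = tm A M (dF (q + 1)) y := by
  rw [Module.notMem_support_iff']
  constructor
  · intro h z hz
    obtain ⟨s, hs, h2⟩ := h (Submodule.Quotient.mk ⟨z, hz⟩)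
    refine ⟨s, hs, ?_⟩
    have h3 := (Submodule.Quotient.mk_eq_zero (Submodule.comap
      (LinearMap.ker (torDout R A M F dF (q + 1))).subtype
      (LinearMap.range (torD R A M F dF (q + 1)))) (x := s • (⟨z, hz⟩ : LinearMap.ker (torDout R A M F dF (q + 1))))).1 h2
    obtain ⟨y, hy⟩ := h3
    exact ⟨y, hy.symm⟩
  · intro h m
    obtain ⟨⟨z, hz⟩, rfl⟩ := Submodule.Quotient.mk_surjective _ m
    obtain ⟨s, hs, y, h2⟩ := h z hz
    refine ⟨s, hs, ?_⟩
    exact (Submodule.Quotient.mk_eq_zero (Submodule.comap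
      (LinearMap.ker (torDout R A M F dF (q + 1))).subtype
      (LinearMap.range (torD R A M F dF (q + 1)))) (x := s • (⟨z, hz⟩ : LinearMap.ker (torDout R A M F dF (q + 1))))).2 ⟨y, h2.symm⟩

/-- Vanishing of local cohomology of `Tor_1` propagates to the higher `Tor`. -/
lemma lcV_tor {n : ℕ} (x : Fin n → A)
    (hexact : ∀ q : ℕ, Function.Exact (dF (q + 1)) (dF q))
    (hexact0 : Function.Exact (dF 0) ε) (hsurj : Function.Surjective ε) (c : ℕ)
    (h : ∀ p, c ≤ p → lcVanish A x (torMod R A M F dF 1) p) (q p : ℕ) (hp : c ≤ p) :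
    lcVanish A x (torMod R A M F dF (q + 1)) p := by
  haveI := torMod_finite A M dF 1
  haveI := torMod_finite A M dF (q + 1)
  refine lcV_support x _ c h (n + 1) p (by omega) hp _ ?_
  intro P hP
  by_contra hP1
  rw [torMod_notMem] at hP1
  revert hP
  change P ∉ _
  rw [torMod_notMem]
  exact rigidity hexact hexact0 hsurj P.2 hP1 q

end rig

end PartThree

noncomputable section PartFour

/-- Graded projections on an `A`-module. -/
structure GP (R : Type) [CommRing R] {A : Type} [CommRing A] [Algebra R A] {n : ℕ} (x : Fin n → A)
    (w : Fin n → ℤ) (N : Type) [AddCommGroup N] [Module R N] [Module A N] where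
  π : ℤ → N →ₗ[R] N
  hx : ∀ j ν m, π (ν + w j) (x j • m) = x j • π ν m
  idem : ∀ ν m, π ν (π ν m) = π ν m
  orth : ∀ ν ν' m, ν ≠ ν' → π ν (π ν' m) = 0

variable {R : Type} [CommRing R] {A : Type} [CommRing A] [Algebra R A] {n : ℕ} {x : Fin n → A}
  {w : Fin n → ℤ}
variable {N : Type} [AddCommGroup N] [Module R N] [Module A N] [IsScalarTower R A N]
variable {N' : Type} [AddCommGroup N'] [Module R N'] [Module A N'] [IsScalarTower R A N']

namespace GP
variable (G : GP R x w N) (G' : GP R x w N')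

def Sp : Prop := ∀ m, ∃ s : Finset ℤ, ∑ ν ∈ s, G.π ν m = m

lemma hprod (T : Finset (Fin n)) (ν : ℤ) (m : N) :
    G.π (ν + ∑ i ∈ T, w i) ((∏ i ∈ T, x i) • m) = (∏ i ∈ T, x i) • G.π ν m := by
  classical
  induction T using Finset.induction_on generalizing ν with
  | empty => simp
  | insert a T ha ih =>
    rw [Finset.prod_insert ha, Finset.sum_insert ha, mul_smul, mul_smul,
      add_comm (w a), ← add_assoc, G.hx, ih]

lemma hpow (T : Finset (Fin n)) (b : ℕ) (ν : ℤ) (m : N) :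
    G.π (ν + b * ∑ i ∈ T, w i) ((∏ i ∈ T, x i) ^ b • m) = (∏ i ∈ T, x i) ^ b • G.π ν m := by
  induction b generalizing ν with
  | zero => simp
  | succ b ih =>
    rw [pow_succ', mul_smul, mul_smul, ← ih, ← G.hprod]
    congr 2; push_cast; ring

/-- The projection to degree `μ` on a localization. -/
def eF (μ : ℤ) (T : Finset (Fin n)) (c : cechL A x N T) : cechL A x N T :=
  cfrac x T (cfrac_exists x T c).choose
    (G.π (μ + (cfrac_exists x T c).choose * ∑ i ∈ T, w i) (cfrac_exists x T c).choose_spec.choose)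

lemma eF_cfrac (μ : ℤ) (T : Finset (Fin n)) (k : ℕ) (m : N) :
    G.eF μ T (cfrac x T k m) = cfrac x T k (G.π (μ + k * ∑ i ∈ T, w i) m) := by
  unfold eF
  have h := (cfrac_exists x T (cfrac x T k m)).choose_spec.choose_spec
  set l := (cfrac_exists x T (cfrac x T k m)).choose
  set m' := (cfrac_exists x T (cfrac x T k m)).choose_spec.choose
  rw [cfrac_eq_iff] at h ⊢
  obtain ⟨a, h⟩ := h
  refine ⟨a, ?_⟩
  rw [← G.hpow, ← G.hpow, ← h]
  congr 2; push_cast; ring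

lemma cfrac_exists2 (T : Finset (Fin n)) (c d : cechL A x N T) :
    ∃ k m m', c = cfrac x T k m ∧ d = cfrac x T k m' := by
  obtain ⟨k, m, rfl⟩ := cfrac_exists x T c
  obtain ⟨l, m', rfl⟩ := cfrac_exists x T d
  refine ⟨k + l, _, (∏ i ∈ T, x i) ^ k • m', cfrac_shift x T k l m, ?_⟩
  rw [add_comm]; exact cfrac_shift x T l k m'

def eL (μ : ℤ) (T : Finset (Fin n)) : cechL A x N T →+ cechL A x N T :=
  AddMonoidHom.mk' (G.eF μ T) (by
    intro c d
    obtain ⟨k, m, m', rfl, rfl⟩ := cfrac_exists2 T c d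
    rw [← cfrac_add, eF_cfrac, eF_cfrac, eF_cfrac, map_add, cfrac_add])

lemma eL_cfrac (μ : ℤ) (T : Finset (Fin n)) (k : ℕ) (m : N) :
    G.eL μ T (cfrac x T k m) = cfrac x T k (G.π (μ + k * ∑ i ∈ T, w i) m) := G.eF_cfrac μ T k m

lemma eL_idem (μ : ℤ) (T : Finset (Fin n)) (c : cechL A x N T) :
    G.eL μ T (G.eL μ T c) = G.eL μ T c := by
  obtain ⟨k, m, rfl⟩ := cfrac_exists x T c
  rw [eL_cfrac, eL_cfrac, G.idem]

lemma eL_smul (μ : ℤ) (T : Finset (Fin n)) (r : R) (c : cechL A x N T) :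
    G.eL μ T (algebraMap R A r • c) = algebraMap R A r • G.eL μ T c := by
  obtain ⟨k, m, rfl⟩ := cfrac_exists x T c
  rw [← cfrac_smul, eL_cfrac, eL_cfrac, ← cfrac_smul, algebraMap_smul, algebraMap_smul, map_smul]

lemma eL_cechMap (μ : ℤ) (S T : Finset (Fin n)) (h : S ⊆ T) (c : cechL A x N S) :
    G.eL μ T (cechMap A x N S T h c) = cechMap A x N S T h (G.eL μ S c) := by
  obtain ⟨k, m, rfl⟩ := cfrac_exists x S c
  rw [cechMap_cfrac, eL_cfrac, eL_cfrac, cechMap_cfrac, ← G.hpow]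
  congr 3
  rw [← Finset.sum_sdiff h]; ring

lemma eL_csgn (μ : ℤ) (T U : Finset (Fin n)) (j : Fin n) (c : cechL A x N T) :
    G.eL μ T ((csgn U j : A) • c) = (csgn U j : A) • G.eL μ T c := by
  unfold csgn
  rcases neg_one_pow_eq_or A (U.filter (fun a => a < j)).card with h | h <;> rw [h] <;> simp

lemma eL_map (f : N →ₗ[A] N') (hf : ∀ ν m, f (G.π ν m) = G'.π ν (f m)) (μ : ℤ)
    (T : Finset (Fin n)) (c : cechL A x N T) :
    cechLmap x f T (G.eL μ T c) = G'.eL μ T (cechLmap x f T c) := by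
  obtain ⟨k, m, rfl⟩ := cfrac_exists x T c
  simp [eL_cfrac, hf]

/-- The projection on cochains. -/
def eC (μ : ℤ) (p : ℕ) : cechC A x N p →+ cechC A x N p where
  toFun c := fun T => G.eL μ T.1 (c T)
  map_zero' := by ext T; simp
  map_add' a b := by ext T; simp

lemma eC_apply (μ : ℤ) (p : ℕ) (c : cechC A x N p) (T) : G.eC μ p c T = G.eL μ T.1 (c T) := rfl

lemma eC_idem (μ : ℤ) (p : ℕ) (c : cechC A x N p) : G.eC μ p (G.eC μ p c) = G.eC μ p c := by
  ext T; exact G.eL_idem _ _ _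

lemma eC_smul (μ : ℤ) (p : ℕ) (r : R) (c : cechC A x N p) :
    G.eC μ p (algebraMap R A r • c) = algebraMap R A r • G.eC μ p c := by
  ext T; exact G.eL_smul _ _ _ _

lemma eC_map (f : N →ₗ[A] N') (hf : ∀ ν m, f (G.π ν m) = G'.π ν (f m)) (μ : ℤ)
    (p : ℕ) (c : cechC A x N p) :
    cechCmap x f p (G.eC μ p c) = G'.eC μ p (cechCmap x f p c) := by
  ext T; exact G.eL_map G' f hf _ _ _

lemma eC_D (μ : ℤ) (p : ℕ) (c : cechC A x N p) :
    cechD A x N p (G.eC μ p c) = G.eC μ (p + 1) (cechD A x N p c) := by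
  ext T
  rw [eC_apply, cechD_apply, cechD_apply, map_sum]
  refine Finset.sum_congr rfl fun j hj => ?_
  rw [eL_csgn, eL_cechMap]
  congr 2
  unfold cext
  split_ifs with h
  · rfl
  · simp

lemma eC_cBd (μ : ℤ) {p : ℕ} {c : cechC A x N p} (h : c ∈ cBd x N p) :
    G.eC μ p c ∈ cBd x N p := by
  cases p with
  | zero => obtain ⟨b, rfl⟩ := h; simp [cechDprev]
  | succ q => obtain ⟨b, rfl⟩ := h; exact ⟨G.eC μ q b, G.eC_D μ q b⟩

lemma eC_cocycle (μ : ℤ) {p : ℕ} {c : cechC A x N p} (h : cechD A x N p c = 0) :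
    cechD A x N p (G.eC μ p c) = 0 := by
  rw [eC_D, h, map_zero]

/-- Vanishing of the degree `μ` part of the `i`-th local cohomology. -/
def Van (i : ℕ) (μ : ℤ) : Prop :=
  ∀ z : cechC A x N i, cechD A x N i z = 0 → G.eC μ i z ∈ cBd x N i

lemma mem_grade (ℳ : ℤ → AddSubgroup N) (h : ∀ ν m, m ∈ ℳ ν ↔ G.π ν m = m) (μ : ℤ)
    (T : Finset (Fin n)) (c : cechL A x N T) :
    c ∈ cechGrade A x N ℳ w μ T ↔ G.eL μ T c = c := by
  constructor
  · intro hc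
    refine AddSubgroup.closure_induction (p := fun c _ => G.eL μ T c = c) ?_ ?_ ?_ ?_ hc
    · rintro c ⟨m, k, hm, rfl⟩
      refine (G.eL_cfrac μ T k m).trans ?_
      rw [(h _ _).1 hm]; rfl
    · exact map_zero _
    · intro a b _ _ ha hb; rw [map_add, ha, hb]
    · intro a _ ha; rw [map_neg, ha]
  · intro hc
    obtain ⟨k, m, rfl⟩ := cfrac_exists x T c
    rw [eL_cfrac] at hc
    rw [← hc]
    refine AddSubgroup.subset_closure ⟨_, k, ?_, rfl⟩
    rw [h, G.idem]

lemma van_iff (ℳ : ℤ → AddSubgroup N) (h : ∀ ν m, m ∈ ℳ ν ↔ G.π ν m = m) (i : ℕ) (μ : ℤ) :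
    ¬ lcGradeNonzero A x N ℳ w i μ ↔ G.Van i μ := by
  unfold lcGradeNonzero Van
  simp only [isBoundary_iff, G.mem_grade ℳ h]
  constructor
  · intro H z hz
    by_contra hc
    exact H ⟨G.eC μ i z, fun T => G.eL_idem _ _ _, G.eC_cocycle μ hz, hc⟩
  · rintro H ⟨c, hc, hz, hb⟩
    apply hb
    have : G.eC μ i c = c := by ext T; exact hc T
    rw [← this]
    exact H c hz

end GP

section tens
variable (G : GP R x w N) (L : Type) [AddCommGroup L] [Module R L]

/-- Tensoring the projections. -/
def GP.tens : GP R x w (TensorProduct R N L) where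
  π ν := LinearMap.rTensor L (G.π ν)
  hx j ν m := by
    induction m using TensorProduct.induction_on with
    | zero => simp
    | add a b ha hb => rw [smul_add, map_add, map_add, ha, hb, smul_add]
    | tmul a b =>
      rw [TensorProduct.smul_tmul', LinearMap.rTensor_tmul, LinearMap.rTensor_tmul,
        TensorProduct.smul_tmul', G.hx]
  idem ν m := by
    induction m using TensorProduct.induction_on with
    | zero => simp
    | add a b ha hb => rw [map_add, map_add, ha, hb]
    | tmul a b => simp [G.idem]
  orth ν ν' m h := by
    induction m using TensorProduct.induction_on with
    | zero => simp
    | add a b ha hb => rw [map_add, map_add, ha, hb, add_zero]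
    | tmul a b => simp [G.orth _ _ _ h]

variable {L} in
lemma GP.tens_tmul (ν : ℤ) (a : N) (b : L) : (G.tens L).π ν (a ⊗ₜ b) = G.π ν a ⊗ₜ b := rfl

lemma GP.tm_tens {L' : Type} [AddCommGroup L'] [Module R L'] (f : L →ₗ[R] L') (ν : ℤ)
    (z : TensorProduct R N L) :
    tm A N f ((G.tens L).π ν z) = (G.tens L').π ν (tm A N f z) := by
  induction z using TensorProduct.induction_on with
  | zero => simp
  | add a b ha hb => rw [map_add, map_add, ha, hb, map_add, map_add]
  | tmul a b => rfl

lemma GP.mem_tens (ℳ : ℤ → AddSubgroup N) (h : ∀ ν m, m ∈ ℳ ν ↔ G.π ν m = m) (ν : ℤ)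
    (z : TensorProduct R N L) :
    z ∈ AddSubgroup.closure {z : TensorProduct R N L | ∃ m ∈ ℳ ν, ∃ c, z = m ⊗ₜ[R] c} ↔
    (G.tens L).π ν z = z := by
  constructor
  · intro hz
    refine AddSubgroup.closure_induction (p := fun c _ => (G.tens L).π ν c = c) ?_ ?_ ?_ ?_ hz
    · rintro c ⟨m, hm, k, rfl⟩
      rw [G.tens_tmul, (h _ _).1 hm]
    · exact map_zero _
    · intro a b _ _ ha hb; rw [map_add, ha, hb]
    · intro a _ ha; rw [map_neg, ha]
  · intro hz
    rw [← hz]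
    clear hz
    induction z using TensorProduct.induction_on with
    | zero => simp
    | add a b ha hb => rw [map_add]; exact add_mem ha hb
    | tmul a b =>
      exact AddSubgroup.subset_closure ⟨G.π ν a, by rw [h, G.idem], b, rfl⟩

end tens

section decomp
open MvPolynomial

variable (M : Type) [AddCommGroup M] [Module (MvPolynomial (Fin n) R) M] [Module R M]
    [IsScalarTower R (MvPolynomial (Fin n) R) M]
    (ℳ : ℤ → AddSubgroup M) [DirectSum.Decomposition ℳ]
    [SetLike.GradedSMul (weightedHomogeneousSubmodule R w) ℳ]

lemma dec_smul (i j : ℤ) (a : MvPolynomial (Fin n) R) (ha : a ∈ weightedHomogeneousSubmodule R w i)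
    (m : M) : ((DirectSum.decompose ℳ (a • m) (j + i) : ℳ (j + i)) : M) =
      a • (DirectSum.decompose ℳ m j : M) := by
  induction m using DirectSum.Decomposition.inductionOn ℳ with
  | zero => simp
  | @homogeneous k m =>
    have h1 : a • (m : M) ∈ ℳ (i + k) := SetLike.GradedSMul.smul_mem ha m.2
    by_cases h : k = j
    · subst h
      rw [add_comm] at h1
      rw [DirectSum.decompose_of_mem_same ℳ h1, DirectSum.decompose_of_mem_same ℳ m.2]
    · rw [DirectSum.decompose_of_mem_ne ℳ h1 (by omega), DirectSum.decompose_of_mem_ne ℳ m.2 h,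
        smul_zero]
  | add a b ha hb =>
    rw [smul_add, DirectSum.decompose_add, DirectSum.decompose_add, DirectSum.add_apply,
      DirectSum.add_apply, AddSubgroup.coe_add, AddSubgroup.coe_add, ha, hb, smul_add]

variable (R) in
/-- The projections of a graded module. -/
def GP.ofDec : GP R (fun j : Fin n => (X j : MvPolynomial (Fin n) R)) w M where
  π ν :=
    { toFun := fun m => (DirectSum.decompose ℳ m ν : M)
      map_add' := fun a b => by simp
      map_smul' := fun r m => by
        have := dec_smul (w := w) M ℳ 0 ν (C r) (isWeightedHomogeneous_C w r) m
        rw [← algebraMap_smul (MvPolynomial (Fin n) R) r m, RingHom.id_apply,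
          ← algebraMap_smul (MvPolynomial (Fin n) R) r, algebraMap_eq, ← this, add_zero] }
  hx j ν m := dec_smul (w := w) M ℳ (w j) ν (X j) (isWeightedHomogeneous_X R w j) m
  idem ν m := DirectSum.decompose_of_mem_same ℳ (DirectSum.decompose ℳ m ν).2
  orth ν ν' m h := DirectSum.decompose_of_mem_ne ℳ (DirectSum.decompose ℳ m ν').2 (Ne.symm h)

lemma GP.ofDec_sp : (GP.ofDec R (w := w) M ℳ).Sp := by
  classical
  intro m
  exact ⟨_, DirectSum.sum_support_decompose ℳ m⟩

lemma GP.ofDec_mem (ν : ℤ) (m : M) : m ∈ ℳ ν ↔ (GP.ofDec R (w := w) M ℳ).π ν m = m := by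
  constructor
  · intro h; exact DirectSum.decompose_of_mem_same ℳ h
  · intro h; rw [← h]; exact (DirectSum.decompose ℳ m ν).2

end decomp

end PartFour

noncomputable section PartFive

variable {R : Type} [CommRing R] {A : Type} [CommRing A] [Algebra R A] {n : ℕ} {x : Fin n → A}
  {w : Fin n → ℤ}
variable {N : Type} [AddCommGroup N] [Module R N] [Module A N] [IsScalarTower R A N]
variable {N' : Type} [AddCommGroup N'] [Module R N'] [Module A N'] [IsScalarTower R A N']
variable {M : Type} [AddCommGroup M] [Module R M] [Module A M] [IsScalarTower R A M]

namespace GP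

/-- The projection as an `R`-linear map. -/
def eR (G : GP R x w N) (μ : ℤ) (p : ℕ) : cechC A x N p →ₗ[R] cechC A x N p where
  toFun := G.eC μ p
  map_add' := map_add _
  map_smul' r c := by
    rw [← algebraMap_smul A r c, G.eC_smul, algebraMap_smul, RingHom.id_apply]

lemma eR_apply (G : GP R x w N) (μ : ℤ) (p : ℕ) (c) : G.eR μ p c = G.eC μ p c := rfl

/-- The class map. -/
def cls (G : GP R x w N) (i : ℕ) (μ : ℤ) : cechC A x N i →ₗ[R] (cechC A x N i ⧸ cBd x N i) :=
  (cBd x N i).mkQ.restrictScalars R ∘ₗ G.eR μ i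

lemma cls_eq_zero (G : GP R x w N) (i : ℕ) (μ : ℤ) (c) :
    G.cls i μ c = 0 ↔ G.eC μ i c ∈ cBd x N i :=
  Submodule.Quotient.mk_eq_zero _

lemma cls_eq (G : GP R x w N) (i : ℕ) (μ : ℤ) (c d) :
    G.cls i μ c = G.cls i μ d ↔ G.eC μ i c - G.eC μ i d ∈ cBd x N i := by
  rw [← sub_eq_zero, ← map_sub, cls_eq_zero, map_sub]

/-- The degree `μ` part of local cohomology as an `R`-submodule. -/
def HS (G : GP R x w N) (i : ℕ) (μ : ℤ) : Submodule R (cechC A x N i ⧸ cBd x N i) :=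
  Submodule.map (G.cls i μ) ((LinearMap.ker (cechD A x N i)).restrictScalars R)

lemma HS_mem (G : GP R x w N) {i : ℕ} (μ : ℤ) {z : cechC A x N i} (h : cechD A x N i z = 0) :
    G.cls i μ z ∈ G.HS i μ := ⟨z, h, rfl⟩

lemma HS_bot (G : GP R x w N) (i : ℕ) (μ : ℤ) : G.HS i μ = ⊥ ↔ G.Van i μ := by
  rw [eq_bot_iff]
  constructor
  · intro h z hz
    exact (G.cls_eq_zero i μ z).1 (h (G.HS_mem μ hz))
  · rintro h _ ⟨z, hz, rfl⟩
    exact (G.cls_eq_zero i μ z).2 (h z hz)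

end GP

section pr
variable {L : Type} [AddCommGroup L] [Module R L]

variable (A M) in
/-- Contraction with a functional. -/
def prS (φ : L →ₗ[R] R) : TensorProduct R M L →ₗ[A] M :=
  (TensorProduct.AlgebraTensorModule.rid R A M).toLinearMap ∘ₗ tm A M φ

lemma prS_tmul (φ : L →ₗ[R] R) (m : M) (l : L) : prS A M φ (m ⊗ₜ l) = φ l • m := by
  simp [prS]

lemma prS_graded (G : GP R x w M) (φ : L →ₗ[R] R) (ν : ℤ) (z : TensorProduct R M L) :
    prS A M φ ((G.tens L).π ν z) = G.π ν (prS A M φ z) := by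
  induction z using TensorProduct.induction_on with
  | zero => simp
  | add a b ha hb => rw [map_add, map_add, ha, hb, map_add, map_add]
  | tmul a b => rw [G.tens_tmul, prS_tmul, prS_tmul, map_smul]

lemma tmulS_graded (G : GP R x w M) (l : L) (ν : ℤ) (m : M) :
    tmulRightS R A M L l (G.π ν m) = (G.tens L).π ν (tmulRightS R A M L l m) := rfl

lemma prS_tmulS (φ : L →ₗ[R] R) (l : L) :
    prS A M φ ∘ₗ tmulRightS R A M L l = algebraMap R A (φ l) • LinearMap.id := by
  ext m
  exact (prS_tmul φ m l).trans (algebraMap_smul A _ _).symm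

lemma prS_tm {L' : Type} [AddCommGroup L'] [Module R L'] (φ : L' →ₗ[R] R) (f : L →ₗ[R] L') :
    prS A M φ ∘ₗ tm A M f = prS A M (φ ∘ₗ f) := by
  refine LinearMap.ext fun z => ?_
  simp only [prS, LinearMap.comp_apply, tm_comp]

lemma prS_sum {ι : Type} [Fintype ι] (b : Module.Basis ι R L) (ψ : L →ₗ[R] R) :
    prS A M ψ = ∑ i, algebraMap R A (ψ (b i)) • prS A M (b.coord i) := by
  refine LinearMap.ext fun z => ?_
  induction z using TensorProduct.induction_on with
  | zero => simp
  | add a b ha hb => rw [map_add, map_add, ha, hb]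
  | tmul m l =>
    simp only [LinearMap.sum_apply, LinearMap.smul_apply, prS_tmul, algebraMap_smul]
    simp only [smul_smul]
    rw [← Finset.sum_smul]
    congr 1
    have h := congrArg ψ (b.sum_repr l)
    rw [map_sum] at h
    rw [← h]
    refine Finset.sum_congr rfl fun j _ => ?_
    rw [map_smul, smul_eq_mul, mul_comm, Module.Basis.coord_apply]

lemma id_sum {ι : Type} [Fintype ι] (b : Module.Basis ι R L) :
    (LinearMap.id : TensorProduct R M L →ₗ[A] TensorProduct R M L) =
      ∑ i, tmulRightS R A M L (b i) ∘ₗ prS A M (b.coord i) := by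
  refine LinearMap.ext fun z => ?_
  induction z using TensorProduct.induction_on with
  | zero => simp
  | add a b ha hb => rw [map_add, map_add, ha, hb]
  | tmul m l =>
    simp only [LinearMap.sum_apply, LinearMap.comp_apply, prS_tmul, LinearMap.id_apply]
    change _ = ∑ i, ((b.coord i l • m) ⊗ₜ[R] b i : TensorProduct R M L)
    simp only [TensorProduct.smul_tmul, ← TensorProduct.tmul_sum]
    congr 1
    exact (b.sum_repr l).symm

lemma van_tens (G : GP R x w M) [Module.Free R L] [Module.Finite R L] (i : ℕ) (μ : ℤ)
    (h : G.Van i μ) : (G.tens L).Van i μ := by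
  intro z hz
  rw [← cechCmap_id x i ((G.tens L).eC μ i z), id_sum (A := A) (M := M) (Module.Free.chooseBasis R L),
    cechCmap_sum]
  refine Submodule.sum_mem _ fun j _ => ?_
  rw [← cechCmap_comp, GP.eC_map _ G _ (prS_graded G _)]
  refine cBd_map x _ (h _ ?_)
  rw [cechCmap_D, hz, map_zero]

end pr

section chase
variable {F : ℕ → Type} [∀ q, AddCommGroup (F q)] [∀ q, Module R (F q)]
    {dF : ∀ q : ℕ, F (q + 1) →ₗ[R] F q}

variable (A M dF) in
lemma tor_fix' (hexact : ∀ q : ℕ, Function.Exact (dF (q + 1)) (dF q))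
    (q p : ℕ) (hT : lcVanish A x (torMod R A M F dF (q + 1)) p)
    (y : cechC A x (TensorProduct R M (F (q + 1))) p) (hy : cechCmap x (tm A M (dF q)) p y = 0)
    (hD : cechD A x _ p y = 0) :
    ∃ (k : cechC A x (LinearMap.ker (tm A M (dF q))) p)
      (w' : cechC A x (TensorProduct R M (F (q + 2))) p),
      k ∈ cBd x _ p ∧
      y = cechCmap x (Submodule.subtype _) p k + cechCmap x (tm A M (dF (q + 1))) p w' := by
  let K := LinearMap.ker (tm A M (dF q))
  let f : TensorProduct R M (F (q + 2)) →ₗ[A] K := LinearMap.codRestrict K (tm A M (dF (q + 1)))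
    (fun z => by
      rw [LinearMap.mem_ker, tm_comp, (hexact q).linearMap_comp_eq_zero, tm_zero])
  let g : K →ₗ[A] (K ⧸ Submodule.comap K.subtype (LinearMap.range (tm A M (dF (q + 1))))) :=
    Submodule.mkQ _
  have hfg : Function.Exact f g := by
    intro k
    change Submodule.Quotient.mk k = 0 ↔ _
    rw [Submodule.Quotient.mk_eq_zero]
    constructor
    · rintro ⟨z, hz⟩; exact ⟨z, Subtype.ext hz⟩
    · rintro ⟨z, hz⟩; exact ⟨z, congrArg Subtype.val hz⟩
  have hg : Function.Surjective g := Submodule.mkQ_surjective _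
  have hK : Function.Exact K.subtype (tm A M (dF q)) := by
    intro k
    constructor
    · intro h; exact ⟨⟨k, h⟩, rfl⟩
    · rintro ⟨z, rfl⟩; exact z.2
  obtain ⟨k, rfl⟩ := (cechCmap_exact x _ _ hK p y).1 hy
  have hDk : cechD A x K p k = 0 := by
    apply cechCmap_injective x K.subtype K.injective_subtype
    rw [← cechCmap_D, hD, map_zero]
  have h1 : cechCmap x g p k ∈ cBd x _ p := by
    have hT' : lcVanish A x (K ⧸ Submodule.comap K.subtype (LinearMap.range (tm A M (dF (q + 1))))) p :=
      hT
    refine (lcVanish_iff x p).1 hT' _ ?_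
    rw [cechCmap_D x g p k, hDk, map_zero]
  obtain ⟨b, hb, u, hu⟩ := cBd_lift_exact x f g hfg hg h1
  refine ⟨b, u, hb, ?_⟩
  rw [hu, map_add, cechCmap_comp]
  rfl

variable (A M dF) in
lemma tor_fix (hexact : ∀ q : ℕ, Function.Exact (dF (q + 1)) (dF q))
    (q p : ℕ) (hT : lcVanish A x (torMod R A M F dF (q + 1)) (p + 1))
    (u : cechC A x (TensorProduct R M (F (q + 1))) p)
    (hu : cechCmap x (tm A M (dF q)) (p + 1) (cechD A x _ p u) = 0) :
    ∃ (u' : cechC A x (TensorProduct R M (F (q + 1))) p)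
      (w' : cechC A x (TensorProduct R M (F (q + 2))) (p + 1)),
      cechCmap x (tm A M (dF q)) p u' = cechCmap x (tm A M (dF q)) p u ∧
      cechD A x _ p u' = cechCmap x (tm A M (dF (q + 1))) (p + 1) w' := by
  obtain ⟨k, w', ⟨v, hv⟩, h⟩ := tor_fix' A M dF hexact q (p + 1) hT _ hu (cechD_D x p u)
  change cechD A x _ p v = k at hv
  refine ⟨u - cechCmap x (Submodule.subtype _) p v, w', ?_, ?_⟩
  · rw [map_sub, cechCmap_comp]
    have : tm A M (dF q) ∘ₗ (LinearMap.ker (tm A M (dF q))).subtype = 0 := by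
      ext z; exact z.2
    rw [this, cechCmap_zero, sub_zero]
  · rw [map_sub, cechCmap_D, hv, h]; abel

lemma tm_comp_zero (hexact : ∀ q : ℕ, Function.Exact (dF (q + 1)) (dF q)) (q : ℕ) :
    tm A M (dF q) ∘ₗ tm A M (dF (q + 1)) = 0 := by
  refine LinearMap.ext fun z => ?_
  rw [LinearMap.comp_apply, tm_comp, (hexact q).linearMap_comp_eq_zero, tm_zero]; rfl

/-- The statement of the main claim of the chase. -/
def Claim (G : GP R x w M) (dF : ∀ q : ℕ, F (q + 1) →ₗ[R] F q) (μ : ℤ) (i q : ℕ) : Prop :=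
  ∀ (c : cechC A x (TensorProduct R M (F q)) i)
    (u : cechC A x (TensorProduct R M (F (q + 1))) (i + 1)),
    cechD A x _ i c = cechCmap x (tm A M (dF q)) (i + 1) u →
    ∃ b ∈ cBd x _ i, ∃ a, (G.tens (F q)).eC μ i c = b + cechCmap x (tm A M (dF q)) i a

lemma claim_step (hexact : ∀ q : ℕ, Function.Exact (dF (q + 1)) (dF q))
    (G : GP R x w M) (μ : ℤ) (i q : ℕ) (hC : Claim G dF μ (i + 1) (q + 1))
    (hT : lcVanish A x (torMod R A M F dF (q + 1)) (i + 2))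
    (c : cechC A x (TensorProduct R M (F q)) i)
    (u : cechC A x (TensorProduct R M (F (q + 1))) (i + 1))
    (h : cechD A x _ i c = cechCmap x (tm A M (dF q)) (i + 1) u) :
    ∃ a, cechD A x _ i ((G.tens (F q)).eC μ i c - cechCmap x (tm A M (dF q)) i a) = 0 := by
  obtain ⟨u', w', h1, h2⟩ := tor_fix A M dF hexact q (i + 1) hT u (by
    rw [← cechCmap_D, ← h, cechD_D])
  obtain ⟨b, ⟨a, ha⟩, a', h3⟩ := hC u' w' h2
  change cechD A x _ i a = b at ha
  refine ⟨a, ?_⟩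
  rw [map_sub, cechCmap_D, GP.eC_D, h, ← h1, ← GP.eC_map _ _ _ (G.tm_tens _ _), h3, map_add, ha,
    cechCmap_comp, tm_comp_zero hexact, cechCmap_zero]
  simp

lemma claim (hexact : ∀ q : ℕ, Function.Exact (dF (q + 1)) (dF q))
    (G : GP R x w M) (μ : ℤ) (k : ℕ) : ∀ (i : ℕ) (_ : n + 1 ≤ i + k)
    (_ : ∀ j, i ≤ j → ∀ q, (G.tens (F q)).Van j μ)
    (_ : ∀ j, i + 2 ≤ j → ∀ q, lcVanish A x (torMod R A M F dF (q + 1)) j) (q : ℕ),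
    Claim G dF μ i q := by
  induction k with
  | zero =>
    intro i hi _ _ q c u h
    refine ⟨0, zero_mem _, 0, ?_⟩
    exact (cechC_eq_zero x (by omega) _).trans (cechC_eq_zero x (by omega) _).symm
  | succ k ih =>
    intro i hi hV hT q c u h
    obtain ⟨a, ha⟩ := claim_step hexact G μ i q
      (ih (i + 1) (by omega) (fun j hj => hV j (by omega)) (fun j hj => hT j (by omega)) _)
      (hT _ le_rfl _) c u h
    refine ⟨_, hV i le_rfl q _ ha, (G.tens (F (q + 1))).eC μ i a, ?_⟩
    rw [map_sub, GP.eC_idem, GP.eC_map _ _ _ (G.tm_tens _ _)]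
    abel


variable {k : Type} [AddCommGroup k] [Module R k] {ε : F 0 →ₗ[R] k}

lemma dir1 (hexact : ∀ q : ℕ, Function.Exact (dF (q + 1)) (dF q))
    (hexact0 : Function.Exact (dF 0) ε) (hsurj : Function.Surjective ε)
    [∀ q, Module.Free R (F q)] [∀ q, Module.Finite R (F q)]
    (G : GP R x w M) (μ : ℤ) (i : ℕ)
    (hV : ∀ j, i ≤ j → G.Van j μ)
    (hT : ∀ j, i + 2 ≤ j → ∀ q, lcVanish A x (torMod R A M F dF (q + 1)) j) :
    (G.tens k).Van i μ := by
  intro z hz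
  obtain ⟨c, rfl⟩ := cechCmap_surjective x (tm A M ε) (tm_surj ε hsurj) i z
  rw [cechCmap_D] at hz
  obtain ⟨u, hu⟩ := (cechCmap_exact x _ _ (tm_exact _ _ hexact0 hsurj) _ _).1 hz
  obtain ⟨b, hb, a, h⟩ := claim hexact G μ (n + 1) i (by omega)
    (fun j hj q => van_tens G j μ (hV j hj)) hT 0 c u hu.symm
  rw [← GP.eC_map _ _ _ (G.tm_tens _ _), h, map_add, cechCmap_comp]
  have : tm A M ε ∘ₗ tm A M (dF 0) = 0 := by
    refine LinearMap.ext fun z => ?_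
    rw [LinearMap.comp_apply, tm_comp, hexact0.linearMap_comp_eq_zero, tm_zero]; rfl
  rw [this, cechCmap_zero, add_zero]
  exact cBd_map x _ hb

lemma dir2 [IsLocalRing R] {ε : F 0 →ₗ[R] (R ⧸ IsLocalRing.maximalIdeal R)}
    (hexact : ∀ q : ℕ, Function.Exact (dF (q + 1)) (dF q))
    (hexact0 : Function.Exact (dF 0) ε) (hsurj : Function.Surjective ε)
    [∀ q, Module.Free R (F q)] [∀ q, Module.Finite R (F q)]
    (G : GP R x w M) (μ : ℤ) (i : ℕ)
    (hV : ∀ j, i + 1 ≤ j → G.Van j μ)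
    (hT : ∀ j, i + 1 ≤ j → ∀ q, lcVanish A x (torMod R A M F dF (q + 1)) j)
    (hVk : (G.tens (R ⧸ IsLocalRing.maximalIdeal R)).Van i μ)
    (hfg : (G.HS i μ).FG) : G.Van i μ := by
  rw [← GP.HS_bot]
  refine Submodule.eq_bot_of_le_smul_of_le_jacobson_bot (IsLocalRing.maximalIdeal R) _ hfg ?_
    (IsLocalRing.maximalIdeal_le_jacobson _)
  rintro _ ⟨z, hz, rfl⟩
  replace hz : cechD A x M i z = 0 := hz
  obtain ⟨g, hg⟩ := hsurj (Ideal.Quotient.mk _ 1)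
  obtain ⟨φ, hφ⟩ := exists_phi ε
  let ι := tmulRightS R A M (F 0) g
  have hιz : cechD A x _ i (cechCmap x ι i z) = 0 := by rw [cechCmap_D, hz, map_zero]
  have h1 := hVk (cechCmap x (tm A M ε) i (cechCmap x ι i z)) (by rw [cechCmap_D, hιz, map_zero])
  rw [← GP.eC_map _ _ _ (G.tm_tens _ _)] at h1
  obtain ⟨b, hb, u, hu⟩ := cBd_lift_exact x _ _ (tm_exact _ _ hexact0 hsurj) (tm_surj ε hsurj) h1
  obtain ⟨u', w', h2, h3⟩ := tor_fix A M dF hexact 0 i (hT _ le_rfl _) u (by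
    have := congrArg (cechD A x _ i) hu
    rw [GP.eC_cocycle _ _ hιz, map_add, cBd_D x hb, zero_add, cechCmap_D] at this
    exact this.symm)
  obtain ⟨a, ha⟩ := claim_step hexact G μ i 1
    (claim hexact G μ (n + 1) (i + 1) (by omega) (fun j hj q => van_tens G j μ (hV j hj))
      (fun j hj => hT j (by omega)) 2) (hT _ (by omega) _) u' w' h3
  set z1 := (G.tens (F 1)).eC μ i u' - cechCmap x (tm A M (dF 1)) i a with hz1
  have h4 : cechCmap x (tm A M (dF 0)) i z1 =
      (G.tens (F 0)).eC μ i (cechCmap x ι i z) - (G.tens (F 0)).eC μ i b := by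
    rw [hz1, map_sub, cechCmap_comp, tm_comp_zero hexact, cechCmap_zero, sub_zero,
      GP.eC_map _ _ _ (G.tm_tens _ _), h2, ← map_sub]
    have h5 : cechCmap x (tm A M (dF 0)) i u = (G.tens (F 0)).eC μ i (cechCmap x ι i z) - b := by
      rw [hu]; abel
    rw [h5, map_sub, map_sub, GP.eC_idem]
  have h6 : cechCmap x (prS A M φ) i (cechCmap x (tm A M (dF 0)) i z1) =
      algebraMap R A (φ g) • G.eC μ i z - G.eC μ i (cechCmap x (prS A M φ) i b) := by
    rw [h4, map_sub, GP.eC_map _ _ _ (prS_graded G _), GP.eC_map _ _ _ (prS_graded G _),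
      cechCmap_comp, prS_tmulS, cechCmap_smul, cechCmap_id, G.eC_smul]
  let bs := Module.Free.chooseBasis R (F 1)
  rw [cechCmap_comp, prS_tm, prS_sum bs, cechCmap_sum] at h6
  have h7 : φ g • G.cls i μ z =
      ∑ j, φ (dF 0 (bs j)) • G.cls i μ (cechCmap x (prS A M (bs.coord j)) i z1) := by
    simp only [← map_smul, ← map_sum]
    rw [GP.cls_eq]
    have h8 := congrArg (G.eC μ i) h6
    rw [map_sub, G.eC_idem, G.eC_smul, G.eC_idem, ← G.eC_smul] at h8
    have h9 : G.eC μ i (cechCmap x (prS A M φ) i b) ∈ cBd x M i := G.eC_cBd μ (cBd_map x _ hb)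
    rw [algebraMap_smul] at h8
    have h10 : ∑ j, φ (dF 0 (bs j)) • cechCmap x (prS A M (bs.coord j)) i z1 =
      ∑ j, cechCmap x (algebraMap R A ((φ ∘ₗ dF 0) (bs j)) • prS A M (bs.coord j)) i z1 := by
      refine Finset.sum_congr rfl fun j _ => ?_
      rw [cechCmap_smul, algebraMap_smul]; rfl
    rw [h10, h8]
    simpa using h9
  have hu : IsUnit (φ g) := by
    by_contra hnu
    have : ε g = 0 := by
      rw [← hφ, Ideal.Quotient.eq_zero_iff_mem]; exact hnu
    rw [hg, Ideal.Quotient.eq_zero_iff_mem] at this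
    exact (Ideal.ne_top_iff_one _).1 (IsLocalRing.maximalIdeal.isMaximal R).ne_top this
  rw [← Submodule.smul_mem_iff_of_isUnit _ hu, h7]
  refine Submodule.sum_mem _ fun j _ => Submodule.smul_mem_smul ?_ (G.HS_mem μ ?_)
  · rw [← Ideal.Quotient.eq_zero_iff_mem, hφ]
    exact hexact0.apply_apply_eq_zero _
  · rw [cechCmap_D, ha, map_zero]

end chase

end PartFive

noncomputable section PartSix
open MvPolynomial

variable {R : Type} [CommRing R] {n : ℕ} 

variable (R n) in
/-- The variables. -/
abbrev vX : Fin n → MvPolynomial (Fin n) R := fun j => X j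

/-- exponent of a product of variables -/
def fS (T : Finset (Fin n)) : Fin n →₀ ℕ := ∑ i ∈ T, Finsupp.single i 1

lemma fS_apply (T : Finset (Fin n)) (j : Fin n) : fS T j = if j ∈ T then 1 else 0 := by
  classical
  simp [fS, Finsupp.finset_sum_apply, Finsupp.single_apply]

lemma prod_vX (T : Finset (Fin n)) (k : ℕ) :
    (∏ i ∈ T, vX R n i) ^ k = monomial (k • fS T) (1 : R) := by
  have : (∏ i ∈ T, vX R n i) = monomial (fS T) (1 : R) := by
    unfold fS
    rw [monomial_sum_one]
    rfl
  rw [this, monomial_pow, one_pow]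

lemma div_key (T : Finset (Fin n)) (j : Fin n) (hj : j ∉ T) (k b : ℕ) (m : MvPolynomial (Fin n) R) :
    ((∏ i ∈ insert j T, vX R n i) ^ b * m).divMonomial (Finsupp.single j (k + b)) =
      (∏ i ∈ T, vX R n i) ^ b * m.divMonomial (Finsupp.single j k) := by
  have h : (b • fS (insert j T) : Fin n →₀ ℕ) = Finsupp.single j b + b • fS T := by
    unfold fS
    rw [Finset.sum_insert hj, smul_add]; simp
  have h2 : (monomial (b • fS (insert j T)) (1 : R)) =
      monomial (Finsupp.single j b) 1 * monomial (b • fS T) 1 := by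
    rw [h, monomial_mul, one_mul]
  rw [prod_vX, prod_vX, h2, mul_assoc, add_comm k b, Finsupp.single_add, divMonomial_add,
    divMonomial_monomial_mul]
  ext d
  rw [coeff_divMonomial, coeff_monomial_mul', coeff_monomial_mul', coeff_divMonomial]
  have h3 : b • fS T ≤ Finsupp.single j k + d ↔ b • fS T ≤ d := by
    rw [Finsupp.le_def, Finsupp.le_def]
    refine forall_congr' fun l => ?_
    by_cases hl : j = l
    · subst hl; simp [fS_apply, hj]
    · simp [Finsupp.single_apply, hl]
  by_cases hd : b • fS T ≤ d
  · rw [if_pos hd, if_pos (h3.2 hd)]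
    rw [add_tsub_assoc_of_le hd]
  · rw [if_neg hd, if_neg (mt h3.1 hd)]

/-- division by powers of a variable -/
def etaF (j : Fin n) (U T : Finset (Fin n)) (c : cechL _ (vX R n) (MvPolynomial (Fin n) R) U) :
    cechL _ (vX R n) (MvPolynomial (Fin n) R) T :=
  cfrac (vX R n) T (cfrac_exists (vX R n) U c).choose
    ((cfrac_exists (vX R n) U c).choose_spec.choose.divMonomial
      (Finsupp.single j (cfrac_exists (vX R n) U c).choose))

lemma etaF_cfrac (j : Fin n) (U T : Finset (Fin n)) (hj : j ∉ T) (hU : U = insert j T) (k : ℕ)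
    (m : MvPolynomial (Fin n) R) :
    etaF j U T (cfrac (vX R n) U k m) = cfrac (vX R n) T k (m.divMonomial (Finsupp.single j k)) := by
  unfold etaF
  have h := (cfrac_exists (vX R n) U (cfrac (vX R n) U k m)).choose_spec.choose_spec
  set l := (cfrac_exists (vX R n) U (cfrac (vX R n) U k m)).choose
  set m' := (cfrac_exists (vX R n) U (cfrac (vX R n) U k m)).choose_spec.choose
  rw [cfrac_eq_iff] at h ⊢
  obtain ⟨a, h⟩ := h
  refine ⟨a, ?_⟩
  simp only [smul_eq_mul] at h ⊢
  rw [← div_key T j hj, ← div_key T j hj, ← hU, ← h]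
  congr 2; omega

lemma div_add (m m' : MvPolynomial (Fin n) R) (s) : (m + m').divMonomial s =
    m.divMonomial s + m'.divMonomial s := add_divMonomial _ _ _

/-- division by powers of a variable, additive -/
def etaL (j : Fin n) (U T : Finset (Fin n)) (hj : j ∉ T) (hU : U = insert j T) :
    cechL _ (vX R n) (MvPolynomial (Fin n) R) U →+ cechL _ (vX R n) (MvPolynomial (Fin n) R) T :=
  AddMonoidHom.mk' (etaF j U T) (by
    intro c d
    obtain ⟨k, m, m', rfl, rfl⟩ := GP.cfrac_exists2 U c d
    rw [← cfrac_add, etaF_cfrac _ _ _ hj hU, etaF_cfrac _ _ _ hj hU, etaF_cfrac _ _ _ hj hU, div_add,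
      cfrac_add])

lemma etaL_cfrac (j : Fin n) (U T : Finset (Fin n)) (hj : j ∉ T) (hU : U = insert j T) (k : ℕ)
    (m : MvPolynomial (Fin n) R) :
    etaL j U T hj hU (cfrac (vX R n) U k m) =
      cfrac (vX R n) T k (m.divMonomial (Finsupp.single j k)) := etaF_cfrac j U T hj hU k m

lemma etaL_csgn (j : Fin n) (U T : Finset (Fin n)) (hj : j ∉ T) (hU : U = insert j T)
    (V : Finset (Fin n)) (l : Fin n) (c) :
    etaL (R := R) j U T hj hU ((csgn V l : MvPolynomial (Fin n) R) • c) =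
      (csgn V l : MvPolynomial (Fin n) R) • etaL j U T hj hU c := by
  unfold csgn
  rcases neg_one_pow_eq_or (MvPolynomial (Fin n) R) (V.filter (fun a => a < l)).card with h | h <;>
    rw [h] <;> simp

lemma etaL_map (j : Fin n) (U T : Finset (Fin n)) (hj : j ∉ T) (hU : U = insert j T) (h : T ⊆ U)
    (c) : etaL (R := R) j U T hj hU (cechMap _ _ _ T U h c) = c := by
  obtain ⟨k, m, rfl⟩ := cfrac_exists (vX R n) T c
  rw [cechMap_cfrac, etaL_cfrac]
  have : U \ T = {j} := by rw [hU]; ext a; simp; grind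
  rw [this, prod_vX]
  have h2 : k • fS ({j} : Finset (Fin n)) = Finsupp.single j k := by simp [fS]
  rw [h2, smul_eq_mul, divMonomial_monomial_mul]

lemma div_mul_X (j l : Fin n) (hl : l ≠ j) (k b : ℕ) (m : MvPolynomial (Fin n) R) :
    ((∏ i ∈ {l}, vX R n i) ^ b * m).divMonomial (Finsupp.single j k) =
      (∏ i ∈ {l}, vX R n i) ^ b * m.divMonomial (Finsupp.single j k) := by
  have h2 : b • fS ({l} : Finset (Fin n)) = Finsupp.single l b := by simp [fS]
  rw [prod_vX, h2]
  ext d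
  rw [coeff_divMonomial, coeff_monomial_mul', coeff_monomial_mul', coeff_divMonomial]
  have h3 : Finsupp.single l b ≤ Finsupp.single j k + d ↔ Finsupp.single l b ≤ d := by
    rw [Finsupp.single_le_iff, Finsupp.single_le_iff]
    simp [Finsupp.single_apply, Ne.symm hl]
  by_cases hd : Finsupp.single l b ≤ d
  · rw [if_pos hd, if_pos (h3.2 hd)]
    rw [add_tsub_assoc_of_le hd]
  · rw [if_neg hd, if_neg (mt h3.1 hd)]

lemma etaL_comm (j l : Fin n) (hl : l ≠ j) (U T U' T' : Finset (Fin n)) (hj : j ∉ T)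
    (hU : U = insert j T) (hj' : j ∉ T') (hU' : U' = insert j T') (hlT : l ∉ T') (hT : T = insert l T')
    (h : U' ⊆ U) (h' : T' ⊆ T) (c) :
    etaL (R := R) j U T hj hU (cechMap _ _ _ U' U h c) =
      cechMap _ _ _ T' T h' (etaL j U' T' hj' hU' c) := by
  obtain ⟨k, m, rfl⟩ := cfrac_exists (vX R n) U' c
  have h1 : U \ U' = {l} := by rw [hU, hU', hT]; ext a; simp; grind
  have h2 : T \ T' = {l} := by rw [hT]; ext a; simp; grind
  rw [cechMap_cfrac, etaL_cfrac, etaL_cfrac, cechMap_cfrac, h1, h2, smul_eq_mul, smul_eq_mul,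
    div_mul_X j l hl]

end PartSix

noncomputable section PartSeven
open MvPolynomial

variable {R : Type} [CommRing R] {n : ℕ}

/-- the truncation operator -/
def rho (j : Fin n) {p : ℕ} (z : cechC _ (vX R n) (MvPolynomial (Fin n) R) p) :
    cechC _ (vX R n) (MvPolynomial (Fin n) R) p := fun T =>
  if h : j ∈ T.1 then
    cechMap _ _ _ (T.1.erase j) T.1 (Finset.erase_subset _ _)
      (etaL j T.1 (T.1.erase j) (Finset.notMem_erase _ _) (Finset.insert_erase h).symm (z T))
  else z T

/-- the homotopy -/
def hmt (j : Fin n) {p : ℕ} (z : cechC _ (vX R n) (MvPolynomial (Fin n) R) (p + 1)) :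
    cechC _ (vX R n) (MvPolynomial (Fin n) R) p := fun T =>
  if h : j ∈ T.1 then 0
  else (csgn (insert j T.1) j : MvPolynomial (Fin n) R) • etaL j (insert j T.1) T.1 h rfl
    (cext _ z (insert j T.1))

lemma csgn_sq (T : Finset (Fin n)) (j : Fin n) (A : Type) [CommRing A] :
    (csgn T j * csgn T j : A) = 1 := by
  unfold csgn
  rw [← mul_pow]; simp

lemma csgn_rel (T : Finset (Fin n)) (j l : Fin n) (hj : j ∉ T) (hl : l ∈ T) (A : Type) [CommRing A] :
    (csgn T l * csgn ((insert j T).erase l) j : A) =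
      - (csgn (insert j T) j * csgn (insert j T) l) := by
  have hne : l ≠ j := by rintro rfl; exact hj hl
  have h : (csgn (insert j T) l * csgn ((insert j T).erase l) j : A) =
      - (csgn (insert j T) j * csgn T l) := by
    rcases lt_or_gt_of_ne hne with h | h
    · have := csgn_swap (A := A) (insert j T) l j (by simp [hl]) h
      rwa [Finset.erase_insert hj] at this
    · have := csgn_swap (A := A) (insert j T) j l (by simp) h
      rw [Finset.erase_insert hj] at this
      rw [this, neg_neg]
  have h1 := csgn_sq (insert j T) l A
  have h2 := csgn_sq T l A
  linear_combination (csgn (insert j T) l * csgn T l) * h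
    - (csgn T l * csgn ((insert j T).erase l) j) * h1
    - (csgn (insert j T) j * csgn (insert j T) l) * h2

lemma cext_eq {A : Type} [CommRing A] (x : Fin n → A) {M : Type} [AddCommGroup M] [Module A M] {p : ℕ}
    (c : cechC A x M p) (S : Finset (Fin n)) (h : S.card = p) : cext x c S = c ⟨S, h⟩ := by
  rw [cext, dif_pos h]

/-- the consequence of the cocycle condition -/
lemma coc_rel (j : Fin n) {p : ℕ} (z : cechC _ (vX R n) (MvPolynomial (Fin n) R) p)
    (hz : cechD _ _ _ p z = 0) (T : {S : Finset (Fin n) // S.card = p}) (hj : j ∉ T.1) :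
    z T = - ∑ l ∈ T.1.attach, ((csgn (insert j T.1) j * csgn (insert j T.1) l.1 : MvPolynomial (Fin n) R)) •
      cechMap _ _ _ (T.1.erase l.1) T.1 (Finset.erase_subset _ _)
        (etaL j ((insert j T.1).erase l.1) (T.1.erase l.1) (by simp [hj])
          (by rw [Finset.erase_insert_of_ne (by rintro h; exact hj (h ▸ l.2))])
          (cext _ z ((insert j T.1).erase l.1))) := by
  have h0 := congrFun hz ⟨insert j T.1, by rw [Finset.card_insert_of_notMem hj, T.2]⟩
  rw [cechD_apply] at h0
  have h1 := congrArg (etaL j (insert j T.1) T.1 hj rfl) h0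
  rw [Pi.zero_apply, map_zero, map_sum, Finset.sum_insert hj] at h1
  rw [etaL_csgn] at h1
  have h2 : etaL j (insert j T.1) T.1 hj rfl (cechMap (MvPolynomial (Fin n) R) (vX R n) _ ((insert j T.1).erase j)
      (insert j T.1) (Finset.erase_subset _ _) (cext (vX R n) z ((insert j T.1).erase j))) = z T := by
    have e : (insert j T.1).erase j = T.1 := Finset.erase_insert hj
    have : ∀ (V : Finset (Fin n)) (hV : V = T.1) (h : V ⊆ insert j T.1),
      etaL j (insert j T.1) T.1 hj rfl (cechMap (MvPolynomial (Fin n) R) (vX R n) _ V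
      (insert j T.1) h (cext (vX R n) z V)) = z T := by
      rintro V rfl h
      rw [etaL_map, cext_eq _ _ _ T.2]
    exact this _ e _
  rw [h2, ← Finset.sum_attach] at h1
  have h3 := congrArg (fun t => (csgn (insert j T.1) j : MvPolynomial (Fin n) R) • t) h1
  simp only [smul_add, smul_smul, csgn_sq, one_smul, smul_zero, Finset.smul_sum] at h3
  rw [eq_neg_iff_add_eq_zero]
  refine Eq.trans ?_ h3
  congr 1
  refine Finset.sum_congr rfl fun l _ => ?_
  have hne : l.1 ≠ j := fun h => hj (h ▸ l.2)
  rw [etaL_csgn, smul_smul]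
  congr 1
  refine (etaL_comm j l.1 hne _ _ _ _ _ _ _ _ ?_ ?_ _ _ _).symm
  · simp
  · rw [Finset.insert_erase l.2]

lemma rho_bd (j : Fin n) {p : ℕ} (z : cechC _ (vX R n) (MvPolynomial (Fin n) R) p)
    (hz : cechD _ _ _ p z = 0) : rho j z ∈ cBd (vX R n) (MvPolynomial (Fin n) R) p := by
  cases p with
  | zero =>
    have : rho j z = 0 := by
      ext1 T
      have hT : T.1 = ∅ := Finset.card_eq_zero.1 T.2
      have hj : j ∉ T.1 := by simp [hT]
      rw [rho, dif_neg hj, coc_rel j z hz T hj, Pi.zero_apply, neg_eq_zero]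
      apply Finset.sum_eq_zero
      rintro ⟨l, hl⟩ _
      exfalso
      rw [hT] at hl; simp at hl
    rw [this]; exact zero_mem _
  | succ p =>
    refine ⟨hmt j z, ?_⟩
    change cechD _ _ _ p (hmt j z) = _
    ext1 T
    rw [cechD_apply, rho]
    split_ifs with h
    · rw [Finset.sum_eq_single j]
      · have hc : (T.1.erase j).card = p := by rw [Finset.card_erase_of_mem h, T.2]; rfl
        rw [cext_eq _ _ _ hc, hmt, dif_neg (by simp), map_smul, smul_smul]
        have : ∀ (V : Finset (Fin n)) (hV : V = T.1) (hh : V = insert j (T.1.erase j)),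
          (csgn T.1 j * csgn V j : MvPolynomial (Fin n) R) •
          cechMap (MvPolynomial (Fin n) R) (vX R n) (MvPolynomial (Fin n) R) (T.1.erase j) T.1 (Finset.erase_subset _ _)
            (etaL j V (T.1.erase j) (by simp) hh (cext _ z V)) =
          cechMap (MvPolynomial (Fin n) R) (vX R n) (MvPolynomial (Fin n) R) (T.1.erase j) T.1 (Finset.erase_subset _ _)
            (etaL j T.1 (T.1.erase j) (by simp) (Finset.insert_erase h).symm (z T)) := by
          rintro V rfl hh
          rw [csgn_sq, one_smul, cext_eq _ _ _ T.2]
        exact this _ (Finset.insert_erase h) rfl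
      · intro l hl hlj
        have hc : (T.1.erase l).card = p := by rw [Finset.card_erase_of_mem hl, T.2]; rfl
        rw [cext_eq _ _ _ hc, hmt, dif_pos, map_zero, smul_zero]
        simp [h, Ne.symm hlj]
      · intro h'; exact absurd h h'
    · rw [coc_rel j z hz T h, ← Finset.sum_neg_distrib, ← Finset.sum_attach]
      refine Finset.sum_congr rfl fun l _ => ?_
      have hl := l.2
      have hc : (T.1.erase l.1).card = p := by rw [Finset.card_erase_of_mem hl, T.2]; rfl
      have hj : j ∉ T.1.erase l.1 := by simp [h]
      rw [cext_eq _ _ _ hc, hmt, dif_neg hj, map_smul, smul_smul, ← neg_smul, ← csgn_rel _ _ _ h hl]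
      have hne : l.1 ≠ j := fun h' => h (h' ▸ l.2)
      have : ∀ (V V' : Finset (Fin n)) (hV : V = V') (hh : V = insert j (T.1.erase l.1))
          (hh' : V' = insert j (T.1.erase l.1)),
          (csgn T.1 l.1 * csgn V j : MvPolynomial (Fin n) R) •
          cechMap (MvPolynomial (Fin n) R) (vX R n) (MvPolynomial (Fin n) R) (T.1.erase l.1) T.1 (Finset.erase_subset _ _)
            (etaL j V (T.1.erase l.1) hj hh (cext _ z V)) =
          (csgn T.1 l.1 * csgn V' j : MvPolynomial (Fin n) R) •
          cechMap (MvPolynomial (Fin n) R) (vX R n) (MvPolynomial (Fin n) R) (T.1.erase l.1) T.1 (Finset.erase_subset _ _)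
            (etaL j V' (T.1.erase l.1) hj hh' (cext _ z V')) := by
          rintro V _ rfl hh _
          rfl
      exact this _ _ (Finset.erase_insert_of_ne hne.symm).symm rfl (Finset.erase_insert_of_ne hne.symm)

lemma van_low {p : ℕ} (hp : p < n) (z : cechC _ (vX R n) (MvPolynomial (Fin n) R) p)
    (hz : cechD _ _ _ p z = 0) : z ∈ cBd (vX R n) (MvPolynomial (Fin n) R) p := by
  have key : ∀ J : Finset (Fin n), ∃ z', z - z' ∈ cBd (vX R n) (MvPolynomial (Fin n) R) p ∧
      cechD _ _ _ p z' = 0 ∧ ∀ T, ¬ J ⊆ T.1 → z' T = 0 := by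
    intro J
    induction J using Finset.induction_on with
    | empty => exact ⟨z, by simp, hz, by simp⟩
    | insert j J hj ih =>
      obtain ⟨z', h1, h2, h3⟩ := ih
      have hr := rho_bd j z' h2
      refine ⟨z' - rho j z', ?_, ?_, ?_⟩
      · rw [sub_sub_eq_add_sub, add_sub_right_comm]; exact add_mem h1 hr
      · rw [map_sub, h2, cBd_D _ hr, sub_zero]
      · intro T hT
        rw [Pi.sub_apply, rho]
        split_ifs with h
        · rw [h3 T (fun h' => hT (Finset.insert_subset h h'))]; simp
        · exact sub_self _
  obtain ⟨z', h1, -, h3⟩ := key Finset.univ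
  have : z' = 0 := by
    ext1 T
    apply h3
    intro h
    have := Finset.card_le_card h
    rw [T.2] at this; simp at this; omega
  rwa [this, sub_zero] at h1

end PartSeven

noncomputable section PartEight
open MvPolynomial

variable {R : Type} [CommRing R] {n : ℕ}

lemma fg_of_le [IsNoetherianRing R] {Q : Type} [AddCommGroup Q] [Module R Q] {H W : Submodule R Q}
    (hW : W.FG) (h : H ≤ W) : H.FG :=
  isNoetherian_submodule.mp (isNoetherian_of_fg_of_noetherian W hW) H h

/-- The graded structure of `S(-a)`. -/
def GP.sh (R : Type) [CommRing R] {n : ℕ} (w : Fin n → ℤ) (a : ℤ) :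
    GP R (vX R n) w (MvPolynomial (Fin n) R) where
  π ν := weightedHomogeneousComponent w (ν - a)
  hx j ν m := by
    classical
    ext d
    rw [smul_eq_mul, smul_eq_mul, coeff_weightedHomogeneousComponent, coeff_X_mul', coeff_X_mul',
      coeff_weightedHomogeneousComponent]
    by_cases h : j ∈ d.support
    · have hd : d = (d - Finsupp.single j 1) + Finsupp.single j 1 := by
        rw [tsub_add_cancel_of_le]
        rw [Finsupp.single_le_iff]
        have := Finsupp.mem_support_iff.1 h
        omega
      have hwt : Finsupp.weight w d = Finsupp.weight w (d - Finsupp.single j 1) + w j := by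
        conv_lhs => rw [hd]
        rw [map_add, Finsupp.weight_single]; simp
      rw [if_pos h, if_pos h, hwt]
      congr 1
      apply propext
      constructor <;> intro h <;> linarith
    · rw [if_neg h, if_neg h]; simp
  idem ν m := by
    classical
    ext d
    rw [coeff_weightedHomogeneousComponent, coeff_weightedHomogeneousComponent]
    split_ifs <;> rfl
  orth ν ν' m h := by
    classical
    ext d
    rw [coeff_weightedHomogeneousComponent, coeff_weightedHomogeneousComponent]
    split_ifs with h1 h2
    · exfalso; apply h; linarith
    · simp
    · simp

lemma GP.sh_monomial (w : Fin n → ℤ) (a ν : ℤ) (d : Fin n →₀ ℕ) (h : Finsupp.weight w d ≠ ν - a) :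
    (GP.sh R w a).π ν (monomial d 1) = 0 := by
  classical
  ext e
  change coeff e (weightedHomogeneousComponent w (ν - a) _) = _
  rw [coeff_weightedHomogeneousComponent, coeff_monomial]
  split_ifs with h1 h2
  · subst h2; exact absurd h1 h
  · simp
  · simp

variable (R n) in
/-- fractions in top degree -/
def mon (k : ℕ) : MvPolynomial (Fin n) R →ₗ[R] cechC _ (vX R n) (MvPolynomial (Fin n) R) n where
  toFun m := fun T => cfrac _ T.1 k m
  map_add' a b := by ext1 T; exact cfrac_add _ _ _ _ _
  map_smul' r a := by
    ext1 T
    change cfrac (vX R n) T.1 k (r • a) = r • cfrac (vX R n) T.1 k a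
    rw [← algebraMap_smul (MvPolynomial (Fin n) R) r, cfrac_smul, algebraMap_smul]

lemma mon_apply (k : ℕ) (m : MvPolynomial (Fin n) R) (T) : mon R n k m T = cfrac (vX R n) T.1 k m := rfl

lemma topT (T : {S : Finset (Fin n) // S.card = n}) : T.1 = Finset.univ := by
  rw [← Finset.card_eq_iff_eq_univ, T.2, Fintype.card_fin]

lemma mon_surj (z : cechC _ (vX R n) (MvPolynomial (Fin n) R) n) : ∃ k m, z = mon R n k m := by
  obtain ⟨k, m, h⟩ := cfrac_exists (vX R n) Finset.univ (z ⟨Finset.univ, by simp⟩)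
  refine ⟨k, m, ?_⟩
  ext1 T
  obtain ⟨T, hT⟩ := T
  obtain rfl : T = Finset.univ := topT ⟨T, hT⟩
  rw [h, mon_apply]

lemma mon_bd (k : ℕ) (d : Fin n →₀ ℕ) (j : Fin n) (h : k ≤ d j) :
    mon R n k (monomial d 1) ∈ cBd (vX R n) (MvPolynomial (Fin n) R) n := by
  have h1 := rho_bd j (mon R n k (monomial d 1)) (cechC_eq_zero _ (by omega) _)
  convert h1 using 1
  ext1 T
  have hj : j ∈ T.1 := by rw [topT T]; simp
  rw [rho, dif_pos hj, mon_apply, etaL_cfrac, cechMap_cfrac]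
  have h2 : T.1 \ T.1.erase j = {j} := by ext a; simp; grind
  have h3 : k • fS ({j} : Finset (Fin n)) = Finsupp.single j k := by simp [fS]
  rw [h2, prod_vX, h3, smul_eq_mul]
  have hd : (monomial d (1 : R)) = monomial (Finsupp.single j k) 1 *
      monomial (d - Finsupp.single j k) 1 := by
    rw [monomial_mul, one_mul, add_tsub_cancel_of_le (Finsupp.single_le_iff.2 h)]
  conv_rhs => rw [hd, divMonomial_monomial_mul]
  rw [← hd]

lemma mon_shift (k B : ℕ) (d d' : Fin n →₀ ℕ) (h : ∀ j, d j + B = d' j + k) :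
    mon R n k (monomial d 1) = mon R n B (monomial d' 1) := by
  ext1 T
  rw [mon_apply, mon_apply, cfrac_eq_iff]
  refine ⟨0, ?_⟩
  rw [prod_vX, prod_vX, smul_eq_mul, smul_eq_mul, monomial_mul, monomial_mul]
  congr 2
  ext j
  simp only [topT T, Finsupp.add_apply, Finsupp.smul_apply, fS_apply, Finset.mem_univ, if_true,
    zero_add, smul_eq_mul, mul_one]
  have := h j
  omega

lemma eC_mon (w : Fin n → ℤ) (a μ : ℤ) (k : ℕ) (m : MvPolynomial (Fin n) R) :
    (GP.sh R w a).eC μ n (mon R n k m) = mon R n k ((GP.sh R w a).π (μ + k * ∑ i, w i) m) := by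
  ext1 T
  rw [GP.eC_apply, mon_apply, mon_apply, GP.eL_cfrac, topT T]

/-- the finite set of generators -/
def gens (w : Fin n → ℤ) (a μ : ℤ) (B : ℕ) :
    Set (cechC _ (vX R n) (MvPolynomial (Fin n) R) n ⧸ cBd (vX R n) (MvPolynomial (Fin n) R) n) :=
  Set.range fun f : Fin n → Fin (B + 1) =>
    (GP.sh R w a).cls n μ (mon R n B (monomial (Finsupp.equivFunOnFinite.symm fun j => (f j : ℕ)) 1))

lemma mem_gens (w : Fin n → ℤ) (hw : ∀ i, 0 < w i) (a μ : ℤ) (k : ℕ) (d : Fin n →₀ ℕ) :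
    (GP.sh R w a).cls n μ (mon R n k (monomial d 1)) ∈
      Submodule.span R (gens (R := R) w a μ (a - μ).natAbs) := by
  by_cases hwt : Finsupp.weight w d = (μ + k * ∑ i, w i) - a
  · by_cases hk : ∃ j, k ≤ d j
    · obtain ⟨j, hj⟩ := hk
      rw [((GP.sh R w a).cls_eq_zero n μ _).2 ((GP.sh R w a).eC_cBd μ (mon_bd k d j hj))]
      exact zero_mem _
    · push Not at hk
      have hsum : ∑ j, ((k : ℤ) - d j) * w j = a - μ := by
        rw [Finsupp.weight_eq_sum] at hwt
        simp only [sub_mul, Finset.sum_sub_distrib, ← Finset.mul_sum]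
        simp only [nsmul_eq_mul] at hwt
        linarith
      have hB : ∀ j, k - d j ≤ (a - μ).natAbs := by
        intro j
        have h1 : ((k : ℤ) - d j) * w j ≤ ∑ j, ((k : ℤ) - d j) * w j :=
          Finset.single_le_sum (f := fun j => ((k : ℤ) - d j) * w j)
            (fun l _ => mul_nonneg (by have := hk l; omega) (hw l).le) (Finset.mem_univ j)
        have h2 : ((k : ℤ) - d j) ≤ ((k : ℤ) - d j) * w j :=
          le_mul_of_one_le_right (by have := hk j; omega) (hw j)
        have := hk j
        omega
      apply Submodule.subset_span
      refine ⟨fun j => ⟨d j + (a - μ).natAbs - k, by have := hk j; omega⟩, ?_⟩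
      simp only
      congr 1
      symm
      apply mon_shift
      intro j
      have := hB j
      have := hk j
      simp only [Finsupp.equivFunOnFinite_symm_apply_apply]
      omega
  · have : (GP.sh R w a).cls n μ (mon R n k (monomial d 1)) = 0 := by
      rw [GP.cls_eq_zero, eC_mon, GP.sh_monomial _ _ _ _ hwt, map_zero]
      exact zero_mem _
    rw [this]; exact zero_mem _

lemma sh_fg [IsNoetherianRing R] (w : Fin n → ℤ) (hw : ∀ i, 0 < w i) (a μ : ℤ) (i : ℕ) :
    ((GP.sh R w a).HS i μ).FG := by
  rcases lt_trichotomy i n with h | rfl | h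
  · rw [((GP.sh R w a).HS_bot i μ).2]
    · exact Submodule.fg_bot
    · intro z hz
      exact (GP.sh R w a).eC_cBd μ (van_low h z hz)
  · refine fg_of_le (W := Submodule.span R (gens (R := R) w a μ (a - μ).natAbs))
      (Submodule.fg_span (Set.finite_range _)) ?_
    rintro _ ⟨z, -, rfl⟩
    obtain ⟨k, m, rfl⟩ := mon_surj z
    induction m using MvPolynomial.induction_on' with
    | monomial d b =>
      have : (monomial d b : MvPolynomial (Fin i) R) = b • monomial d 1 := by
        rw [smul_monomial, smul_eq_mul, mul_one]
      rw [this, map_smul, map_smul]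
      exact Submodule.smul_mem _ _ (mem_gens w hw a μ k _)
    | add p q h1 h2 =>
      rw [map_add, map_add]
      exact Submodule.add_mem _ h1 h2
  · rw [((GP.sh R w a).HS_bot i μ).2]
    · exact Submodule.fg_bot
    · intro z hz
      rw [cechC_eq_zero _ h ((GP.sh R w a).eC μ i z)]
      exact zero_mem _

end PartEight

noncomputable section PartNine
open MvPolynomial

lemma fg_chase {R : Type} [CommRing R] [IsNoetherianRing R] {Γ Q Q' : Type} [AddCommGroup Γ] [Module R Γ]
    [AddCommGroup Q] [Module R Q] [AddCommGroup Q'] [Module R Q'] (γ : Γ →ₗ[R] Q) (β : Γ →ₗ[R] Q')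
    (W : Submodule R Q) (hW : W.FG) (hβ : (LinearMap.range β).FG)
    (h : ∀ c, β c = 0 → γ c ∈ W) : (LinearMap.range γ).FG := by
  apply Submodule.fg_of_fg_map_of_fg_inf_ker W.mkQ
  · have hk : LinearMap.ker β ≤ LinearMap.ker (W.mkQ ∘ₗ γ) := by
      intro c hc
      rw [LinearMap.mem_ker, LinearMap.comp_apply]
      exact (Submodule.Quotient.mk_eq_zero W).2 (h c hc)
    rw [← LinearMap.range_comp, ← Submodule.range_liftQ _ _ hk]
    haveI : Module.Finite R (LinearMap.range β) := Module.Finite.iff_fg.2 hβ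
    haveI : Module.Finite R (Γ ⧸ LinearMap.ker β) :=
      Module.Finite.equiv β.quotKerEquivRange.symm
    exact Module.Finite.iff_fg.1 (Module.Finite.range _)
  · refine fg_of_le hW ?_
    rintro m ⟨_, hm⟩
    rwa [SetLike.mem_coe, Submodule.ker_mkQ] at hm

variable {R : Type} [CommRing R] {A : Type} [CommRing A] [Algebra R A] {n : ℕ} {x : Fin n → A}
  {w : Fin n → ℤ}
variable {N : Type} [AddCommGroup N] [Module R N] [Module A N] [IsScalarTower R A N]
variable {N' : Type} [AddCommGroup N'] [Module R N'] [Module A N'] [IsScalarTower R A N']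

namespace GP

variable (x R) in
/-- induced map on cochains modulo boundaries -/
def qmap (f : N →ₗ[A] N') (i : ℕ) :
    (cechC A x N i ⧸ cBd x N i) →ₗ[R] (cechC A x N' i ⧸ cBd x N' i) :=
  ((cBd x N i).mapQ (cBd x N' i) (cechCmap x f i) (fun c hc => cBd_map x f hc)).restrictScalars R

lemma qmap_cls (G : GP R x w N) (G' : GP R x w N') (f : N →ₗ[A] N')
    (hf : ∀ ν m, f (G.π ν m) = G'.π ν (f m)) (i : ℕ) (μ : ℤ) (c) :
    qmap R x f i (G.cls i μ c) = G'.cls i μ (cechCmap x f i c) := by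
  change Submodule.Quotient.mk (cechCmap x f i (G.eC μ i c)) =
    Submodule.Quotient.mk (G'.eC μ i (cechCmap x f i c))
  rw [G.eC_map G' f hf]

/-- direct sums -/
def pi {ι : Type} (G : ι → GP R x w N) : GP R x w (ι → N) where
  π ν := LinearMap.pi fun j => (G j).π ν ∘ₗ LinearMap.proj j
  hx j ν m := by ext l; exact (G l).hx j ν (m l)
  idem ν m := by ext l; exact (G l).idem ν (m l)
  orth ν ν' m h := by ext l; exact (G l).orth ν ν' (m l) h

lemma pi_apply {ι : Type} (G : ι → GP R x w N) (ν : ℤ) (m : ι → N) (j : ι) :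
    (GP.pi G).π ν m j = (G j).π ν (m j) := rfl

lemma pi_fg {ι : Type} [Fintype ι] [DecidableEq ι] (G : ι → GP R x w N) (i : ℕ) (μ : ℤ)
    (h : ∀ j, ((G j).HS i μ).FG) [IsNoetherianRing R] : ((GP.pi G).HS i μ).FG := by
  refine fg_of_le (W := ⨆ j, Submodule.map (qmap R x (LinearMap.single A (fun _ : ι => N) j) i)
    ((G j).HS i μ)) ?_ ?_
  · exact Submodule.fg_iSup _ fun j => (h j).map _
  · rintro _ ⟨z, hz, rfl⟩
    have hz : cechD A x _ i z = 0 := hz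
    have hid : (LinearMap.id : (ι → N) →ₗ[A] (ι → N)) =
        ∑ j, LinearMap.single A (fun _ : ι => N) j ∘ₗ LinearMap.proj j := by
      refine LinearMap.ext fun m => ?_
      ext l
      simp [LinearMap.sum_apply, Finset.sum_apply, Pi.single_apply]
    have hz2 : z = ∑ j, cechCmap x (LinearMap.single A (fun _ : ι => N) j) i
        (cechCmap x (LinearMap.proj j) i z) := by
      conv_lhs => rw [← cechCmap_id x i z, hid, cechCmap_sum]
      refine Finset.sum_congr rfl fun j _ => ?_
      rw [cechCmap_comp]
    rw [hz2, map_sum]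
    refine Submodule.sum_mem _ fun j _ => ?_
    apply Submodule.mem_iSup_of_mem j
    rw [← qmap_cls (G j) (GP.pi G)]
    · refine Submodule.mem_map_of_mem ((G j).HS_mem μ ?_)
      rw [cechCmap_D, hz, map_zero]
    · intro ν m
      ext l
      rw [pi_apply]
      by_cases hl : l = j
      · subst hl; simp
      · simp [hl]

/-- restriction to a kernel -/
def kerG (G : GP R x w N) (G' : GP R x w N') (f : N →ₗ[A] N')
    (hf : ∀ ν m, f (G.π ν m) = G'.π ν (f m)) : GP R x w (LinearMap.ker f) where
  π ν :=
    { toFun := fun m => ⟨G.π ν m.1, by rw [LinearMap.mem_ker, hf, LinearMap.mem_ker.1 m.2, map_zero]⟩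
      map_add' := fun a b => Subtype.ext (map_add _ _ _)
      map_smul' := fun r a => Subtype.ext (map_smul _ _ _) }
  hx j ν m := Subtype.ext (G.hx j ν m.1)
  idem ν m := Subtype.ext (G.idem ν m.1)
  orth ν ν' m h := Subtype.ext (G.orth ν ν' m.1 h)

lemma kerG_coe (G : GP R x w N) (G' : GP R x w N') (f : N →ₗ[A] N')
    (hf : ∀ ν m, f (G.π ν m) = G'.π ν (f m)) (ν : ℤ) (m : LinearMap.ker f) :
    (((kerG G G' f hf).π ν m : LinearMap.ker f) : N) = G.π ν m := rfl

lemma kerG_sp (G : GP R x w N) (G' : GP R x w N') (f : N →ₗ[A] N')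
    (hf : ∀ ν m, f (G.π ν m) = G'.π ν (f m)) (h : G.Sp) : (kerG G G' f hf).Sp := by
  intro m
  obtain ⟨s, hs⟩ := h m.1
  refine ⟨s, Subtype.ext ?_⟩
  rw [Submodule.coe_sum]
  exact hs

lemma step_fg [IsNoetherianRing R] (G : GP R x w N) (G' : GP R x w N') (f : N →ₗ[A] N')
    (hf : ∀ ν m, f (G.π ν m) = G'.π ν (f m)) (hs : Function.Surjective f) (i : ℕ) (μ : ℤ)
    (h1 : (G.HS i μ).FG) (h2 : ((kerG G G' f hf).HS (i + 1) μ).FG) : (G'.HS i μ).FG := by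
  let K := LinearMap.ker f
  let GK := kerG G G' f hf
  let jj : K →ₗ[A] N := K.subtype
  have hjj : ∀ ν m, jj (GK.π ν m) = G.π ν (jj m) := fun ν m => rfl
  have hjinj : Function.Injective jj := Subtype.val_injective
  have hex : Function.Exact jj f := LinearMap.exact_subtype_ker_map f
  let δ : (cechC A x N i × cechC A x K (i + 1)) →ₗ[R] cechC A x N (i + 1) :=
    ((cechD A x N i) ∘ₗ LinearMap.fst A _ _ - (cechCmap x jj (i + 1)) ∘ₗ LinearMap.snd A _ _).restrictScalars R
  let Γ : Submodule R (cechC A x N i × cechC A x K (i + 1)) := LinearMap.ker δ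
  have hΓ : ∀ c k, (c, k) ∈ Γ ↔ cechD A x N i c = cechCmap x jj (i + 1) k := by
    intro c k
    rw [LinearMap.mem_ker]
    exact sub_eq_zero
  let γ : Γ →ₗ[R] (cechC A x N' i ⧸ cBd x N' i) :=
    G'.cls i μ ∘ₗ (cechCmap x f i).restrictScalars R ∘ₗ LinearMap.fst R _ _ ∘ₗ Γ.subtype
  let β : Γ →ₗ[R] (cechC A x K (i + 1) ⧸ cBd x K (i + 1)) :=
    GK.cls (i + 1) μ ∘ₗ LinearMap.snd R _ _ ∘ₗ Γ.subtype
  refine fg_of_le (W := LinearMap.range γ) (fg_chase γ β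
    (Submodule.map (qmap R x f i) (G.HS i μ)) (h1.map _) (fg_of_le h2 ?_) ?_) ?_
  · rintro _ ⟨⟨⟨c, k⟩, hc⟩, rfl⟩
    rw [hΓ] at hc
    refine GK.HS_mem μ ?_
    apply cechCmap_injective x jj hjinj (i + 2)
    change cechCmap x jj (i + 1 + 1) (cechD A x K (i + 1) k) = _
    rw [← cechCmap_D, ← hc, cechD_D, map_zero]
  · rintro ⟨⟨c, k⟩, hc⟩ hb
    rw [hΓ] at hc
    have hb : GK.eC μ (i + 1) k ∈ cBd x K (i + 1) := (GK.cls_eq_zero _ _ _).1 hb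
    obtain ⟨k2, hk2⟩ := hb
    have hk2 : cechD A x K i k2 = GK.eC μ (i + 1) k := hk2
    refine ⟨G.cls i μ (G.eC μ i c - cechCmap x jj i k2), G.HS_mem μ ?_, ?_⟩
    · rw [map_sub, cechCmap_D, hk2, G.eC_D, hc, GK.eC_map G jj hjj, sub_self]
    · rw [qmap_cls G G' f hf, map_sub, (cechCmap_exact x jj f hex i).apply_apply_eq_zero, sub_zero,
        G.eC_map G' f hf]
      change Submodule.Quotient.mk (G'.eC μ i (G'.eC μ i _)) = Submodule.Quotient.mk (G'.eC μ i _)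
      rw [G'.eC_idem]
      rfl
  · rintro _ ⟨z, hz, rfl⟩
    have hz : cechD A x _ i z = 0 := hz
    obtain ⟨c, rfl⟩ := cechCmap_surjective x f hs i z
    rw [cechCmap_D] at hz
    obtain ⟨k, hk⟩ := (cechCmap_exact x jj f hex (i + 1) _).1 hz
    exact ⟨⟨(c, k), (hΓ _ _).2 hk.symm⟩, rfl⟩

end GP

end PartNine

noncomputable section PartTen
open MvPolynomial

variable {R : Type} [CommRing R] {n : ℕ} {w : Fin n → ℤ}
variable {N : Type} [AddCommGroup N] [Module R N] [Module (MvPolynomial (Fin n) R) N]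
  [IsScalarTower R (MvPolynomial (Fin n) R) N]

namespace GP

lemma hmono (G : GP R (vX R n) w N) (d : Fin n →₀ ℕ) (ν : ℤ) (m : N) :
    G.π (ν + Finsupp.weight w d) ((monomial d (1 : R)) • m) = (monomial d (1 : R)) • G.π ν m := by
  induction d using Finsupp.induction_linear generalizing ν m with
  | zero =>
    have : (monomial 0 (1 : R) : MvPolynomial (Fin n) R) = 1 := rfl
    simp [this]
  | add d e hd he =>
    have : (monomial (d + e) (1 : R)) = monomial d 1 * monomial e 1 := by
      rw [monomial_mul, one_mul]
    rw [this, mul_smul, mul_smul, ← he, ← hd, map_add]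
    congr 2; ring
  | single j k =>
    induction k generalizing ν m with
    | zero =>
      have : (monomial 0 (1 : R) : MvPolynomial (Fin n) R) = 1 := rfl
      simp [this]
    | succ k ih =>
      have : (monomial (Finsupp.single j (k + 1)) (1 : R)) = monomial (Finsupp.single j k) 1 * X j := by
        rw [X, monomial_mul, one_mul, Finsupp.single_add]
      rw [this, mul_smul, mul_smul, ← G.hx, ← ih, Finsupp.single_add, map_add]
      rw [Finsupp.weight_single, Finsupp.weight_single, one_smul]
      congr 2; ring

lemma hcomp (G : GP R (vX R n) w N) (a : ℤ) (g : N) (hg : G.π a g = g) (ν : ℤ)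
    (s : MvPolynomial (Fin n) R) :
    (GP.sh R w a).π ν s • g = G.π ν (s • g) := by
  classical
  induction s using MvPolynomial.induction_on' with
  | add p q hp hq => rw [map_add, add_smul, hp, hq, add_smul, map_add]
  | monomial d r =>
    have h1 : (monomial d r : MvPolynomial (Fin n) R) = r • monomial d 1 := by
      rw [smul_monomial, smul_eq_mul, mul_one]
    rw [h1, map_smul, smul_assoc, smul_assoc, map_smul]
    congr 1
    have h2 := G.hmono d (ν - Finsupp.weight w d) g
    rw [sub_add_cancel] at h2
    rw [h2]
    by_cases h : Finsupp.weight w d = ν - a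
    · have h3 : ν - Finsupp.weight w d = a := by omega
      rw [h3, hg]
      congr 1
      change weightedHomogeneousComponent w (ν - a) _ = _
      ext e
      rw [coeff_weightedHomogeneousComponent, coeff_monomial]
      split_ifs with h4 h5 h5
      · rfl
      · rfl
      · subst h5; exact absurd h h4
      · rfl
    · rw [GP.sh_monomial _ _ _ _ h, zero_smul, ← hg, G.orth _ _ _ (by omega), smul_zero]

lemma pi_sh_sp {ι : Type} [Fintype ι] (a : ι → ℤ) : (GP.pi fun j => GP.sh R w (a j)).Sp := by
  classical
  intro p
  refine ⟨Finset.univ.biUnion fun j => (p j).support.image fun d => Finsupp.weight w d + a j, ?_⟩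
  ext j d
  rw [Finset.sum_apply, coeff_sum]
  simp only [pi_apply]
  change ∑ ν ∈ _, coeff d (weightedHomogeneousComponent w (ν - a j) (p j)) = _
  simp only [coeff_weightedHomogeneousComponent]
  rw [Finset.sum_eq_single (Finsupp.weight w d + a j)]
  · simp
  · intro ν _ hν
    rw [if_neg]; omega
  · intro h
    rw [if_pos (by ring)]
    by_contra hc
    apply h
    rw [Finset.mem_biUnion]
    exact ⟨j, Finset.mem_univ _, Finset.mem_image.2 ⟨d, mem_support_iff.2 hc, rfl⟩⟩

lemma exists_cover (G : GP R (vX R n) w N) (hG : G.Sp) [Module.Finite (MvPolynomial (Fin n) R) N] :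
    ∃ (ι : Type) (_ : Fintype ι) (a : ι → ℤ) (f : (ι → MvPolynomial (Fin n) R) →ₗ[MvPolynomial (Fin n) R] N),
      Function.Surjective f ∧ ∀ ν m, f ((GP.pi fun j => GP.sh R w (a j)).π ν m) = G.π ν (f m) := by
  have h1 : Submodule.span (MvPolynomial (Fin n) R) {g : N | ∃ a, G.π a g = g} = ⊤ := by
    rw [eq_top_iff]
    intro m _
    obtain ⟨s, hs⟩ := hG m
    rw [← hs]
    exact Submodule.sum_mem _ fun ν _ => Submodule.subset_span ⟨ν, G.idem ν m⟩
  have h2 : (Submodule.span (MvPolynomial (Fin n) R) {g : N | ∃ a, G.π a g = g}).FG := by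
    rw [h1]; exact Module.Finite.fg_top
  obtain ⟨s, hs, hspan⟩ := Submodule.fg_span_iff_fg_span_finset_subset _ |>.1 h2
  choose a ha using fun j : s => hs j.2
  refine ⟨s, inferInstance, a, Fintype.linearCombination _ (fun j : s => (j : N)), ?_, ?_⟩
  · rw [← LinearMap.range_eq_top, Fintype.range_linearCombination, Subtype.range_coe_subtype,
      ← h1, hspan]
    rfl
  · intro ν m
    rw [Fintype.linearCombination_apply, Fintype.linearCombination_apply, map_sum]
    refine Finset.sum_congr rfl fun j _ => ?_
    rw [pi_apply, G.hcomp _ _ (ha j)]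

end GP

theorem hs_fg [IsNoetherianRing R] (hw : ∀ i, 0 < w i) (μ : ℤ) (k : ℕ) : ∀ (i : ℕ), n + 1 ≤ i + k →
    ∀ (N : Type) [AddCommGroup N] [Module R N] [Module (MvPolynomial (Fin n) R) N]
    [IsScalarTower R (MvPolynomial (Fin n) R) N] [Module.Finite (MvPolynomial (Fin n) R) N]
    (G : GP R (vX R n) w N), G.Sp → (G.HS i μ).FG := by
  induction k with
  | zero =>
    intro i hi N _ _ _ _ _ G _
    rw [(G.HS_bot i μ).2]
    · exact Submodule.fg_bot
    · intro z hz
      rw [cechC_eq_zero _ (by omega) (G.eC μ i z)]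
      exact zero_mem _
  | succ k ih =>
    intro i hi N _ _ _ _ _ G hG
    classical
    obtain ⟨ι, _, a, f, hs, hf⟩ := G.exists_cover hG
    refine GP.step_fg _ G f hf hs i μ (GP.pi_fg _ i μ fun j => sh_fg w hw _ _ _) ?_
    exact ih (i + 1) (by omega) _ _ (GP.kerG_sp _ _ _ _ (GP.pi_sh_sp a))

end PartTen

noncomputable section PartEleven
open MvPolynomial

variable {R : Type} [CommRing R] [IsNoetherianRing R] [IsLocalRing R]
    {n : ℕ} {w : Fin n → ℤ}
    {M : Type} [AddCommGroup M]
    [Module (MvPolynomial (Fin n) R) M] [Module R M]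
    [IsScalarTower R (MvPolynomial (Fin n) R) M]
    [Module.Finite (MvPolynomial (Fin n) R) M]
    {F : ℕ → Type} [∀ q, AddCommGroup (F q)] [∀ q, Module R (F q)]
    [∀ q, Module.Free R (F q)] [∀ q, Module.Finite R (F q)]
    {dF : ∀ q : ℕ, F (q + 1) →ₗ[R] F q}
    {ε : F 0 →ₗ[R] (R ⧸ IsLocalRing.maximalIdeal R)}

lemma part_one (hexact : ∀ q : ℕ, Function.Exact (dF (q + 1)) (dF q))
    (hexact0 : Function.Exact (dF 0) ε) (hsurj : Function.Surjective ε)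
    (G : GP R (vX R n) w M) (μ ℓ : ℤ)
    (hT : ∀ i : ℕ, ℓ + 1 < (i : ℤ) →
      lcVanish _ (vX R n) (torMod R (MvPolynomial (Fin n) R) M F dF 1) i)
    (hV : ∀ i : ℕ, ℓ ≤ (i : ℤ) → G.Van i μ) (i : ℕ) (hi : ℓ ≤ (i : ℤ)) :
    (G.tens (R ⧸ IsLocalRing.maximalIdeal R)).Van i μ :=
  dir1 hexact hexact0 hsurj G μ i (fun j hj => hV j (by omega)) fun j hj q =>
    lcV_tor (vX R n) hexact hexact0 hsurj (i + 2) (fun p hp => hT p (by push_cast at *; omega)) q j hj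

lemma part_two (hw : ∀ i, 0 < w i) (hexact : ∀ q : ℕ, Function.Exact (dF (q + 1)) (dF q))
    (hexact0 : Function.Exact (dF 0) ε) (hsurj : Function.Surjective ε)
    (G : GP R (vX R n) w M) (hG : G.Sp) (μ ℓ : ℤ)
    (hT : ∀ i : ℕ, ℓ < (i : ℤ) →
      lcVanish _ (vX R n) (torMod R (MvPolynomial (Fin n) R) M F dF 1) i)
    (hV : ∀ i : ℕ, ℓ ≤ (i : ℤ) → (G.tens (R ⧸ IsLocalRing.maximalIdeal R)).Van i μ)
    (k : ℕ) : ∀ (i : ℕ), n + 1 ≤ i + k → ℓ ≤ (i : ℤ) → G.Van i μ := by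
  induction k with
  | zero =>
    intro i hi _ z hz
    rw [cechC_eq_zero _ (by omega) (G.eC μ i z)]
    exact zero_mem _
  | succ k ih =>
    intro i hi hl
    refine dir2 hexact hexact0 hsurj G μ i (fun j hj => ?_) (fun j hj q => ?_) (hV i hl)
      (hs_fg hw μ (n + 1) i (by omega) M G hG)
    · exact ih j (by omega) (by omega)
    · exact lcV_tor (vX R n) hexact hexact0 hsurj (i + 1)
        (fun p hp => hT p (by push_cast at *; omega)) q j hj

lemma van_zero {A : Type} [CommRing A] [Algebra R A] {x : Fin n → A} {N : Type} [AddCommGroup N]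
    [Module R N] [Module A N] [IsScalarTower R A N] (G : GP R x w N) (μ : ℤ)
    (h : Subsingleton (lcMod A x N 0)) : G.Van 0 μ := by
  intro z hz
  apply G.eC_cBd
  have h1 : (Submodule.Quotient.mk (⟨z, hz⟩ : LinearMap.ker (cechD A x N 0)) : lcMod A x N 0) =
    Submodule.Quotient.mk 0 := h.elim _ _
  have h2 := (Submodule.Quotient.eq _).1 h1
  rw [sub_zero] at h2
  exact h2

end PartEleven

open MvPolynomial in
/-- **Proposition (CohFib (ii)).**  Let `(R, 𝔪, k)` be a Noetherian local ring,
`S := R[X_1, …, X_n]` graded with `deg X_i = w i > 0`, `M` a finitely generated graded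
`S`-module and `M̄ := M ⊗_R k`.  Write `cd ≤ c` for the vanishing `H^i_{S₊}(Tor_1^R(M,k)) = 0`
for all `i > c`.  Then for all integers `μ` and `ℓ` :
* if `cd_{S₊}(Tor_1^R(M,k)) ≤ ℓ + 1`, then `H^i_{S₊}(M)_μ = 0` for all `i ≥ ℓ` implies
  `H^i_{S₊}(M̄)_μ = 0` for all `i ≥ ℓ`;
* the two conditions are equivalent if `cd_{S₊}(Tor_1^R(M,k)) ≤ ℓ`;
* in particular `reg M̄ ≤ reg M` if `cd_{S₊}(Tor_1^R(M,k)) ≤ 1`, with equality if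
  moreover `depth_{S₊} M > 0` (i.e. `H^0_{S₊}(M) = 0`).
(`Tor` is computed from any resolution of `k` by finite free `R`-modules, local
cohomology by the graded Čech complex on the variables.) -/
theorem localCohomology_fiber_comparison
    (R : Type) [CommRing R] [IsNoetherianRing R] [IsLocalRing R]
    {n : ℕ} (w : Fin n → ℤ) (hw : ∀ i, 0 < w i)
    (M : Type) [AddCommGroup M]
    [Module (MvPolynomial (Fin n) R) M] [Module R M]
    [IsScalarTower R (MvPolynomial (Fin n) R) M]
    [Module.Finite (MvPolynomial (Fin n) R) M]
    (ℳ : ℤ → AddSubgroup M) [DirectSum.Decomposition ℳ]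
    [SetLike.GradedSMul (weightedHomogeneousSubmodule R w) ℳ]
    (F : ℕ → Type) [∀ q, AddCommGroup (F q)] [∀ q, Module R (F q)]
    [∀ q, Module.Free R (F q)] [∀ q, Module.Finite R (F q)]
    (dF : ∀ q : ℕ, F (q + 1) →ₗ[R] F q)
    (ε : F 0 →ₗ[R] (R ⧸ IsLocalRing.maximalIdeal R))
    (hexact : ∀ q : ℕ, Function.Exact (dF (q + 1)) (dF q))
    (hexact0 : Function.Exact (dF 0) ε) (hsurj : Function.Surjective ε) :
    (∀ μ ℓ : ℤ,
      ((∀ i : ℕ, ℓ + 1 < (i : ℤ) →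
          lcVanish (MvPolynomial (Fin n) R) (fun j : Fin n => (X j : MvPolynomial (Fin n) R))
            (torMod R (MvPolynomial (Fin n) R) M F dF 1) i) →
        ((∀ i : ℕ, ℓ ≤ (i : ℤ) →
          ¬ lcGradeNonzero (MvPolynomial (Fin n) R)
            (fun j : Fin n => (X j : MvPolynomial (Fin n) R)) M ℳ w i μ) →
        (∀ i : ℕ, ℓ ≤ (i : ℤ) →
          ¬ lcGradeNonzero (MvPolynomial (Fin n) R)
            (fun j : Fin n => (X j : MvPolynomial (Fin n) R))
            (TensorProduct R M (R ⧸ IsLocalRing.maximalIdeal R))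
            (fun ν => AddSubgroup.closure
              {z : TensorProduct R M (R ⧸ IsLocalRing.maximalIdeal R) |
                ∃ m ∈ ℳ ν, ∃ c, z = m ⊗ₜ[R] c}) w i μ))) ∧
      ((∀ i : ℕ, ℓ < (i : ℤ) →
          lcVanish (MvPolynomial (Fin n) R) (fun j : Fin n => (X j : MvPolynomial (Fin n) R))
            (torMod R (MvPolynomial (Fin n) R) M F dF 1) i) →
        ((∀ i : ℕ, ℓ ≤ (i : ℤ) →
          ¬ lcGradeNonzero (MvPolynomial (Fin n) R)
            (fun j : Fin n => (X j : MvPolynomial (Fin n) R)) M ℳ w i μ) ↔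
        (∀ i : ℕ, ℓ ≤ (i : ℤ) →
          ¬ lcGradeNonzero (MvPolynomial (Fin n) R)
            (fun j : Fin n => (X j : MvPolynomial (Fin n) R))
            (TensorProduct R M (R ⧸ IsLocalRing.maximalIdeal R))
            (fun ν => AddSubgroup.closure
              {z : TensorProduct R M (R ⧸ IsLocalRing.maximalIdeal R) |
                ∃ m ∈ ℳ ν, ∃ c, z = m ⊗ₜ[R] c}) w i μ)))) ∧
    ((∀ i : ℕ, 1 < (i : ℤ) →
        lcVanish (MvPolynomial (Fin n) R) (fun j : Fin n => (X j : MvPolynomial (Fin n) R))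
          (torMod R (MvPolynomial (Fin n) R) M F dF 1) i) →
      (∀ ρ : ℤ,
        (∃ (i : ℕ) (μ : ℤ),
          lcGradeNonzero (MvPolynomial (Fin n) R)
            (fun j : Fin n => (X j : MvPolynomial (Fin n) R))
            (TensorProduct R M (R ⧸ IsLocalRing.maximalIdeal R))
            (fun ν => AddSubgroup.closure
              {z : TensorProduct R M (R ⧸ IsLocalRing.maximalIdeal R) |
                ∃ m ∈ ℳ ν, ∃ c, z = m ⊗ₜ[R] c}) w i μ ∧ μ + i = ρ) →
        ∃ (i : ℕ) (μ : ℤ),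
          lcGradeNonzero (MvPolynomial (Fin n) R)
            (fun j : Fin n => (X j : MvPolynomial (Fin n) R)) M ℳ w i μ ∧ ρ ≤ μ + i) ∧
      (Subsingleton (lcMod (MvPolynomial (Fin n) R)
          (fun j : Fin n => (X j : MvPolynomial (Fin n) R)) M 0) →
        ∀ ρ : ℤ,
        (∃ (i : ℕ) (μ : ℤ),
          lcGradeNonzero (MvPolynomial (Fin n) R)
            (fun j : Fin n => (X j : MvPolynomial (Fin n) R)) M ℳ w i μ ∧ μ + i = ρ) →
        ∃ (i : ℕ) (μ : ℤ),
          lcGradeNonzero (MvPolynomial (Fin n) R)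
            (fun j : Fin n => (X j : MvPolynomial (Fin n) R))
            (TensorProduct R M (R ⧸ IsLocalRing.maximalIdeal R))
            (fun ν => AddSubgroup.closure
              {z : TensorProduct R M (R ⧸ IsLocalRing.maximalIdeal R) |
                ∃ m ∈ ℳ ν, ∃ c, z = m ⊗ₜ[R] c}) w i μ ∧ ρ ≤ μ + i)) := by
  let G : GP R (vX R n) w M := GP.ofDec R (w := w) M ℳ
  have hG : G.Sp := GP.ofDec_sp M ℳ
  have e1 : ∀ (i : ℕ) (μ : ℤ), ¬ lcGradeNonzero (MvPolynomial (Fin n) R)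
      (fun j : Fin n => (X j : MvPolynomial (Fin n) R)) M ℳ w i μ ↔ G.Van i μ :=
    fun i μ => G.van_iff ℳ (GP.ofDec_mem M ℳ) i μ
  have e2 : ∀ (i : ℕ) (μ : ℤ), ¬ lcGradeNonzero (MvPolynomial (Fin n) R)
      (fun j : Fin n => (X j : MvPolynomial (Fin n) R))
      (TensorProduct R M (R ⧸ IsLocalRing.maximalIdeal R))
      (fun ν => AddSubgroup.closure
        {z : TensorProduct R M (R ⧸ IsLocalRing.maximalIdeal R) |
          ∃ m ∈ ℳ ν, ∃ c, z = m ⊗ₜ[R] c}) w i μ ↔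
      (G.tens (R ⧸ IsLocalRing.maximalIdeal R)).Van i μ :=
    fun i μ => (G.tens _).van_iff _ (G.mem_tens _ ℳ (GP.ofDec_mem M ℳ)) i μ
  refine ⟨fun μ ℓ => ⟨fun hT hV i hi => ?_, fun hT => ⟨fun hV i hi => ?_, fun hV i hi => ?_⟩⟩,
    fun hT => ⟨?_, ?_⟩⟩
  · rw [e2]
    exact part_one hexact hexact0 hsurj G μ ℓ hT (fun i hi => (e1 i μ).1 (hV i hi)) i hi
  · rw [e2]
    exact part_one hexact hexact0 hsurj G μ ℓ (fun j hj => hT j (by omega))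
      (fun i hi => (e1 i μ).1 (hV i hi)) i hi
  · rw [e1]
    exact part_two hw hexact hexact0 hsurj G hG μ ℓ hT (fun i hi => (e2 i μ).1 (hV i hi)) (n + 1) i
      (by omega) hi
  · rintro ρ ⟨i, μ, hi, rfl⟩
    by_contra hc
    push Not at hc
    refine ((e2 i μ).2 (part_one hexact hexact0 hsurj G μ i (fun j hj => hT j (by omega))
      (fun j hj => (e1 j μ).1 fun hn => ?_) i le_rfl)) hi
    have := hc j μ hn
    omega
  · rintro hsub ρ ⟨i, μ, hi, rfl⟩
    by_contra hc
    push Not at hc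
    have hi1 : 1 ≤ i := by
      by_contra h
      obtain rfl : i = 0 := by omega
      exact (e1 0 μ).2 (van_zero G μ hsub) hi
    refine (e1 i μ).2 (part_two hw hexact hexact0 hsurj G hG μ i (fun j hj => hT j (by omega))
      (fun j hj => (e2 j μ).1 fun hn => ?_) (n + 1) i (by omega) le_rfl) hi
    have := hc j μ hn
    omega
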